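/- arXiv:2008.13098 — 5 statements merged into one kernel-verified Lean document; each statement's English description precedes it below -/
import Mathlib

section
/- Adaptive gradient method with an inexact model (general bound). Let x_0 ∈ Q be a starting point, {δ_k}_{k≥0} and {δ̃_k}_{k≥0} nonnegative sequences, and {L_{k+1}}_{k≥0} positive numbers. Set α_{k+1} = 1/L_{k+1} and A_N = Σ_{k=0}^{N-1} α_{k+1}. Suppose that for every k ≥ 0 there is a function ψ_{δ_k}(·, x_k) with value f_{δ_k}(x_k) that is a (δ_k, L̄_{k+1}, ‖·‖)-model of f at x_k for some L̄_{k+1} > 0, that the descent condition f_{δ_k}(x_{k+1}) ≤ f_{δ_k}(x_k) + ψ_{δ_k}(x_{k+1}, x_k) + (L_{k+1}/2)‖x_{k+1} − x_k‖² + δ_k holds, and that x_{k+1} is a δ̃_k-inexact minimizer on Q of φ_{k+1}(x) = (1/L_{k+1}) ψ_{δ_k}(x, x_k) + V[x_k](x). Let x_* be a minimizer of f on Q with V[x_0](x_*) ≤ R², and let x̄_N = (1/A_N) Σ_{k=0}^{N-1} α_{k+1} x_{k+1}. Then f(x̄_N) − f(x_*) ≤ R²/A_N + (1/A_N) Σ_{k=0}^{N-1}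 δ̃_k + (2/A_N) Σ_{k=0}^{N-1} α_{k+1} δ_k. -/
open Finset RealInnerProductSpace

/-!
Write `V y` for the Bregman divergence from `y`. Removing the derivative of `V (x k)` from the
subgradient that certifies `x (k + 1)` as an inexact minimizer leaves a subgradient of the scaled
model alone, and the three-point identity for `V` turns this into the prox inequality
`α ψ (x (k + 1)) + V (x k) (x (k + 1)) + V (x (k + 1)) u ≤ α ψ u + V (x k) u + ε`. Strong
convexity of the prox-function bounds the squared norm in the descent condition by `2 V`, so the
quadratic term there, scaled by `α`, is absorbed by `V (x k) (x (k + 1))`. Since the model is a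
minorant of `f`, a step with descent error `η` gives
`α (f (x (k + 1)) - f u) ≤ V (x k) u - V (x (k + 1)) u + ε + α η`, which telescopes, and Jensen's
inequality passes to the averaged point.
-/

section Convexity

variable {E : Type*} [AddCommGroup E] [Module ℝ E] {Q : Set E}

/-- `1`-strong convexity of `d` on `Q` with distances measured by `ν`, in contrast to Mathlib's
`StrongConvexOn`, which uses the norm of the ambient space. The function `ν` is typically another
norm; `ν = 0` gives convexity. -/
def StrongConvexOnWrt (ν : E → ℝ) (Q : Set E) (d : E → ℝ) : Prop :=
  Convex ℝ Q ∧ ∀ z ∈ Q, ∀ w ∈ Q, ∀ t : ℝ, t ∈ Set.Icc (0 : ℝ) 1 →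
    d (t • z + (1 - t) • w) ≤ t * d z + (1 - t) * d w - t * (1 - t) / 2 * ν (z - w) ^ 2

lemma strongConvexOnWrt_zero_iff {d : E → ℝ} : StrongConvexOnWrt 0 Q d ↔ ConvexOn ℝ Q d := by
  refine and_congr_right fun _ => ⟨fun h z hz w hw a b ha hb hab => ?_,
    fun h z hz w hw t ht => ?_⟩
  · obtain rfl : b = 1 - a := by linarith
    simpa using h z hz w hw a ⟨ha, sub_nonneg.1 hb⟩
  · simpa using h hz hw ht.1 (sub_nonneg.2 ht.2) (add_sub_cancel t 1)

lemma StrongConvexOnWrt.convexOn {ν d : E → ℝ} (h : StrongConvexOnWrt ν Q d) :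
    ConvexOn ℝ Q d := by
  refine strongConvexOnWrt_zero_iff.1 ⟨h.1, fun z hz w hw t ht => (h.2 z hz w hw t ht).trans ?_⟩
  have : 0 ≤ t * (1 - t) / 2 * ν (z - w) ^ 2 := by
    have := mul_nonneg ht.1 (sub_nonneg.2 ht.2)
    positivity
  simpa

lemma map_centerMass_sub_le_of_telescoping {f : E → ℝ} (hf : ConvexOn ℝ Q f) {N : ℕ}
    (hN : 0 < N) {w : ℕ → ℝ} (hw : ∀ k, 0 < w k) {p : ℕ → E} (hp : ∀ k, p k ∈ Q) {c : ℝ}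
    {D e : ℕ → ℝ} (hstep : ∀ k, w k * (f (p k) - c) ≤ D k - D (k + 1) + e k) (hD : 0 ≤ D N) :
    f ((range N).centerMass w p) - c ≤ (D 0 + ∑ k ∈ range N, e k) / ∑ k ∈ range N, w k := by
  have hW : 0 < ∑ k ∈ range N, w k := sum_pos (fun k _ => hw k) ⟨0, mem_range.2 hN⟩
  have hjensen : (∑ k ∈ range N, w k) * f ((range N).centerMass w p) ≤
      ∑ k ∈ range N, w k * f (p k) := by
    rw [← le_inv_mul_iff₀ hW]
    exact hf.map_centerMass_le (fun k _ => (hw k).le) hW fun k _ => hp k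
  rw [le_div_iff₀' hW]
  calc (∑ k ∈ range N, w k) * (f ((range N).centerMass w p) - c)
      ≤ ∑ k ∈ range N, w k * (f (p k) - c) := by
        simpa only [mul_sub, sum_sub_distrib, ← sum_mul] using sub_le_sub_right hjensen _
    _ ≤ ∑ k ∈ range N, (D k - D (k + 1) + e k) := sum_le_sum fun k _ => hstep k
    _ = D 0 - D N + ∑ k ∈ range N, e k := by rw [sum_add_distrib, sum_range_sub']
    _ ≤ D 0 + ∑ k ∈ range N, e k := by linarith

end Convexity

section AdaptiveGradientMethod

variable {E : Type*} [NormedAddCommGroup E] [NormedSpace ℝ E] {Q : Set E}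

/-- A continuous linear functional `ℓ` is a subgradient at `y` of the restriction of `φ` to `Q`.
Membership `y ∈ Q` is not part of the definition. -/
def IsSubgradientOn (Q : Set E) (φ : E → ℝ) (ℓ : StrongDual ℝ E) (y : E) : Prop :=
  ∀ z ∈ Q, φ y + ℓ (z - y) ≤ φ z

/-- `y` is an `ε`-inexact minimizer of `φ` on `Q`, in the sense of the first-order optimality
condition: some subgradient at `y` is at least `-ε` along every displacement within `Q`. -/
def IsInexactMinOn (Q : Set E) (φ : E → ℝ) (ε : ℝ) (y : E) : Prop :=
  ∃ ℓ : StrongDual ℝ E, IsSubgradientOn Q φ ℓ y ∧ ∀ z ∈ Q, -ε ≤ ℓ (z - y)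

/-- The Bregman divergence `V[y](z)` of `d`, where `d'` stands for the derivative of `d`. It is
kept as an argument since `d` is typically differentiable only within a set. -/
def bregmanDiv (d : E → ℝ) (d' : E → StrongDual ℝ E) (y z : E) : ℝ :=
  d z - d y - d' y (z - y)

lemma hasFDerivWithinAt_apply_le_of_segment_le {d : E → ℝ} {d' : StrongDual ℝ E} {y z : E}
    {b : ℝ → ℝ} {b' : ℝ} (hQ : segment ℝ y z ⊆ Q) (hd : HasFDerivWithinAt d d' Q y)
    (hb : HasDerivAt b b' 0) (hb0 : b 0 = d y)
    (hle : ∀ t ∈ Set.Icc (0 : ℝ) 1, d (t • z + (1 - t) • y) ≤ b t) :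
    d' (z - y) ≤ b' := by
  have hmaps : Set.Icc (0 : ℝ) 1 ⊆ (fun t : ℝ => y + t • (z - y)) ⁻¹' Q := by
    rw [← Set.image_subset_iff, ← segment_eq_image']
    exact hQ
  have hderiv : HasDerivWithinAt (fun t => b t - d (y + t • (z - y))) (b' - d' (z - y))
      (Set.Icc 0 1) 0 :=
    hb.hasDerivWithinAt.sub <| HasDerivWithinAt.mono (hd.hasLineDerivWithinAt (z - y)) hmaps
  have hmin : IsMinOn (fun t => b t - d (y + t • (z - y))) (Set.Icc 0 1) 0 := fun t ht => by
    have hpoint : y + t • (z - y) = t • z + (1 - t) • y := by module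
    simpa [hb0, hpoint] using hle t ht
  have hcone : (1 : ℝ) ∈ posTangentConeAt (Set.Icc (0 : ℝ) 1) 0 :=
    mem_posTangentConeAt_of_segment_subset (by simp [segment_eq_Icc])
  simpa using hmin.localize.hasFDerivWithinAt_nonneg hderiv.hasFDerivWithinAt hcone

lemma IsSubgradientOn.sub_hasFDerivWithinAt {p d : E → ℝ} {ℓ d' : StrongDual ℝ E} {y : E}
    (h : IsSubgradientOn Q (p + d) ℓ y) (hp : ConvexOn ℝ Q p)
    (hd : HasFDerivWithinAt d d' Q y) (hy : y ∈ Q) : IsSubgradientOn Q p (ℓ - d') y := by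
  intro z hz
  -- Convexity of `p` and the subgradient inequality bound `d` from below along the segment
  -- from `y` to `z` by an affine function.
  have hb : HasDerivAt (fun t : ℝ => -d y + t * (p z - p y - ℓ (z - y)))
      (p z - p y - ℓ (z - y)) 0 := by
    simpa using ((hasDerivAt_id (0 : ℝ)).mul_const (p z - p y - ℓ (z - y))).const_add (-d y)
  have hle : ∀ t ∈ Set.Icc (0 : ℝ) 1,
      (-d) (t • z + (1 - t) • y) ≤ -d y + t * (p z - p y - ℓ (z - y)) := by
    rintro t ⟨ht0, ht1⟩
    have hconv := hp.2 hz hy ht0 (sub_nonneg.2 ht1) (add_sub_cancel t 1)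
    have hsub := h _ (hp.1 hz hy ht0 (sub_nonneg.2 ht1) (add_sub_cancel t 1))
    have hdispl : t • z + (1 - t) • y - y = t • (z - y) := by module
    simp only [hdispl, map_smul, smul_eq_mul, Pi.add_apply] at hconv hsub
    rw [Pi.neg_apply]
    linarith
  have := hasFDerivWithinAt_apply_le_of_segment_le (hp.1.segment_subset hy hz) hd.neg hb
    (by simp) hle
  simp only [neg_apply, sub_apply] at this ⊢
  linarith

lemma StrongConvexOnWrt.half_sq_le_bregmanDiv {ν d : E → ℝ} {d' : E → StrongDual ℝ E} {y z : E}
    (h : StrongConvexOnWrt ν Q d) (hd : HasFDerivWithinAt d (d' y) Q y) (hy : y ∈ Q)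
    (hz : z ∈ Q) : ν (z - y) ^ 2 / 2 ≤ bregmanDiv d d' y z := by
  have hb : HasDerivAt
      (fun t : ℝ => t * d z + (1 - t) * d y - t * (1 - t) / 2 * ν (z - y) ^ 2)
      (d z - d y - ν (z - y) ^ 2 / 2) 0 := by
    have ht := hasDerivAt_id (0 : ℝ)
    have ht' := ht.const_sub 1
    refine (((ht.mul_const (d z)).add (ht'.mul_const (d y))).sub
      (((ht.mul ht').div_const 2).mul_const (ν (z - y) ^ 2))).congr_deriv ?_
    simp only [id]
    ring
  have := hasFDerivWithinAt_apply_le_of_segment_le (h.1.segment_subset hy hz) hd hb (by simp)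
    (h.2 z hz y hy)
  rw [bregmanDiv]
  linarith

lemma bregmanDiv_nonneg {d : E → ℝ} {d' : E → StrongDual ℝ E} {y z : E} (h : ConvexOn ℝ Q d)
    (hd : HasFDerivWithinAt d (d' y) Q y) (hy : y ∈ Q) (hz : z ∈ Q) :
    0 ≤ bregmanDiv d d' y z := by
  simpa using (strongConvexOnWrt_zero_iff.2 h).half_sq_le_bregmanDiv hd hy hz

lemma bregmanDiv_three_point (d : E → ℝ) (d' : E → StrongDual ℝ E) (x y z : E) :
    bregmanDiv d d' x z =
      bregmanDiv d d' x y + bregmanDiv d d' y z + (d' y - d' x) (z - y) := by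
  simp only [bregmanDiv, sub_apply, map_sub]
  ring

lemma hasFDerivWithinAt_bregmanDiv {d : E → ℝ} {d' : E → StrongDual ℝ E} {x y : E}
    (hd : HasFDerivWithinAt d (d' y) Q y) :
    HasFDerivWithinAt (bregmanDiv d d' x) (d' y - d' x) Q y :=
  (hd.sub_const (d x)).sub <|
    (d' x).hasFDerivWithinAt.comp y ((hasFDerivWithinAt_id y Q).sub_const x) (Set.mapsTo_image _ _)

lemma IsInexactMinOn.add_bregmanDiv_le {p d : E → ℝ} {d' : E → StrongDual ℝ E} {x y u : E}
    {ε : ℝ} (h : IsInexactMinOn Q (p + bregmanDiv d d' x) ε y) (hp : ConvexOn ℝ Q p)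
    (hd : HasFDerivWithinAt d (d' y) Q y) (hy : y ∈ Q) (hu : u ∈ Q) :
    p y + bregmanDiv d d' x y + bregmanDiv d d' y u ≤ p u + bregmanDiv d d' x u + ε := by
  obtain ⟨ℓ, hsub, hinexact⟩ := h
  have hp_sub := hsub.sub_hasFDerivWithinAt hp (hasFDerivWithinAt_bregmanDiv hd) hy u hu
  rw [sub_apply] at hp_sub
  linarith [hinexact u hu, bregmanDiv_three_point d d' x y u]

lemma IsInexactMinOn.mul_sub_le_of_descent {f ψ d : E → ℝ} {d' : E → StrongDual ℝ E} {x y u : E}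
    {α c ε η : ℝ} (h : IsInexactMinOn Q (α • ψ + bregmanDiv d d' x) ε y) (hα : 0 < α)
    (hψ : ConvexOn ℝ Q ψ) (hd : HasFDerivWithinAt d (d' y) Q y) (hy : y ∈ Q) (hu : u ∈ Q)
    (hψf : c + ψ u ≤ f u) (hdescent : f y ≤ c + ψ y + α⁻¹ * bregmanDiv d d' x y + η) :
    α * (f y - f u) ≤ bregmanDiv d d' x u - bregmanDiv d d' y u + (ε + α * η) := by
  have hprox := h.add_bregmanDiv_le (hψ.smul hα.le) hd hy hu
  simp only [Pi.smul_apply, smul_eq_mul] at hprox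
  calc α * (f y - f u)
      ≤ α * (c + ψ y + α⁻¹ * bregmanDiv d d' x y + η - (c + ψ u)) := by gcongr
    _ = α * ψ y + bregmanDiv d d' x y - α * ψ u + α * η := by field_simp; ring
    _ ≤ bregmanDiv d d' x u - bregmanDiv d d' y u + (ε + α * η) := by linarith

theorem adaptive_gradient_method_general_bound_general
    {f d : E → ℝ} {d' : E → StrongDual ℝ E} (hf : ConvexOn ℝ Q f) (hd : ConvexOn ℝ Q d)
    (hd' : ∀ y ∈ Q, HasFDerivWithinAt d (d' y) Q y) {N : ℕ} (hN : 0 < N) {x : ℕ → E}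
    (hx : ∀ k, x k ∈ Q) {α ε η : ℕ → ℝ} (hα : ∀ k, 0 < α k) {ψ : ℕ → E → ℝ} {fδ : ℕ → ℝ}
    (hψ : ∀ k, ConvexOn ℝ Q (ψ k)) (hψf : ∀ k, ∀ z ∈ Q, fδ k + ψ k z ≤ f z)
    (hdescent : ∀ k, f (x (k + 1)) ≤
      fδ k + ψ k (x (k + 1)) + (α k)⁻¹ * bregmanDiv d d' (x k) (x (k + 1)) + η k)
    (hmin : ∀ k, IsInexactMinOn Q (α k • ψ k + bregmanDiv d d' (x k)) (ε k) (x (k + 1)))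
    {u : E} (hu : u ∈ Q) :
    f ((range N).centerMass α fun k => x (k + 1)) - f u ≤
      (bregmanDiv d d' (x 0) u + ∑ k ∈ range N, (ε k + α k * η k)) / ∑ k ∈ range N, α k :=
  map_centerMass_sub_le_of_telescoping hf hN hα (fun k => hx (k + 1))
    (D := fun k => bregmanDiv d d' (x k) u)
    (fun k => (hmin k).mul_sub_le_of_descent (hα k) (hψ k) (hd' _ (hx (k + 1))) (hx (k + 1)) hu
      (hψf k u hu) (hdescent k))
    (bregmanDiv_nonneg hd (hd' _ (hx N)) (hx N) hu)

end AdaptiveGradientMethod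

/-- **Adaptive gradient method with an inexact model (general bound).**
`E = ℝⁿ` with the standard inner product; `nrm` is a (general) norm on `E`;
`d` is a continuously differentiable, `1`-strongly convex (w.r.t. `nrm`) prox-function
with gradient `Dd`, and `V y x = d x - d y - ⟪Dd y, x - y⟫` is the Bregman divergence.
`ψ k` is the model `ψ_{δ_k}(·, x_k)` with value `fδ k` at `x k`. -/
theorem adaptive_gradient_method_general_bound
    {n : ℕ} (Q : Set (EuclideanSpace ℝ (Fin n)))
    (hQne : Q.Nonempty) (hQclosed : IsClosed Q) (hQconv : Convex ℝ Q)
    (f : EuclideanSpace ℝ (Fin n) → ℝ) (hfconv : ConvexOn ℝ Q f)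
    -- a general norm `nrm` on `ℝⁿ`
    (nrm : EuclideanSpace ℝ (Fin n) → ℝ)
    (hnrm_zero : ∀ z, nrm z = 0 ↔ z = 0)
    (hnrm_smul : ∀ (c : ℝ) z, nrm (c • z) = |c| * nrm z)
    (hnrm_add : ∀ z w, nrm (z + w) ≤ nrm z + nrm w)
    -- the prox-function `d`, continuously differentiable and 1-strongly convex w.r.t. `nrm`
    (d : EuclideanSpace ℝ (Fin n) → ℝ)
    (Dd : EuclideanSpace ℝ (Fin n) → EuclideanSpace ℝ (Fin n))
    (hd_diff : ∀ z ∈ Q, HasGradientWithinAt d (Dd z) Q z)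
    (hd_cont : ContinuousOn Dd Q)
    (hd_strong : ∀ z ∈ Q, ∀ w ∈ Q, ∀ t : ℝ, t ∈ Set.Icc (0 : ℝ) 1 →
      d (t • z + (1 - t) • w) ≤
        t * d z + (1 - t) * d w - t * (1 - t) / 2 * nrm (z - w) ^ 2)
    -- Bregman divergence
    (V : EuclideanSpace ℝ (Fin n) → EuclideanSpace ℝ (Fin n) → ℝ)
    (hV : ∀ y z, V y z = d z - d y - ⟪Dd y, z - y⟫)
    -- the method data
    (N : ℕ) (hN : 0 < N)
    (x : ℕ → EuclideanSpace ℝ (Fin n)) (hxQ : ∀ k, x k ∈ Q)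
    (δ δt : ℕ → ℝ) (hδ : ∀ k, 0 ≤ δ k) (hδt : ∀ k, 0 ≤ δt k)
    (L : ℕ → ℝ) (hL : ∀ k, 0 < L (k + 1))
    (α : ℕ → ℝ) (hα : ∀ k, α (k + 1) = 1 / L (k + 1))
    (A : ℝ) (hA : A = ∑ k ∈ range N, α (k + 1))
    -- `ψ k = ψ_{δ_k}(·, x_k)` with value `fδ k = f_{δ_k}(x_k)`:
    -- a `(δ_k, L̄_{k+1}, nrm)`-model of `f` at `x_k` for some `L̄_{k+1} > 0`
    (ψ : ℕ → EuclideanSpace ℝ (Fin n) → ℝ) (fδ : ℕ → ℝ)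
    (hmodel : ∀ k, ∃ Lbar : ℝ, 0 < Lbar ∧
      ConvexOn ℝ Q (ψ k) ∧ ψ k (x k) = 0 ∧
      ∀ z ∈ Q, 0 ≤ f z - (fδ k + ψ k z) ∧
        f z - (fδ k + ψ k z) ≤ Lbar / 2 * nrm (z - x k) ^ 2 + δ k)
    -- the value of the model at the next iterate (`f_{δ_k}(x_{k+1})`)
    (fδnext : ℕ → ℝ)
    (hfδnext : ∀ k, 0 ≤ f (x (k + 1)) - fδnext k ∧
      f (x (k + 1)) - fδnext k ≤ δ k)
    -- descent condition
    (hdescent : ∀ k, fδnext k ≤ fδ k + ψ k (x (k + 1)) +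
      L (k + 1) / 2 * nrm (x (k + 1) - x k) ^ 2 + δ k)
    -- `x_{k+1}` is a `δ̃_k`-inexact minimizer of `φ_{k+1}(z) = (1/L_{k+1}) ψ k z + V (x k) z` on `Q`
    (hmin : ∀ k, ∃ h : EuclideanSpace ℝ (Fin n),
      (∀ z ∈ Q, (1 / L (k + 1)) * ψ k z + V (x k) z ≥
        (1 / L (k + 1)) * ψ k (x (k + 1)) + V (x k) (x (k + 1)) + ⟪h, z - x (k + 1)⟫) ∧
      (∀ z ∈ Q, ⟪h, z - x (k + 1)⟫ ≥ -δt k))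
    -- the optimum
    (xstar : EuclideanSpace ℝ (Fin n)) (hxstarQ : xstar ∈ Q)
    (hxstar : ∀ z ∈ Q, f xstar ≤ f z)
    (R : ℝ) (hR : V (x 0) xstar ≤ R ^ 2)
    -- averaged iterate
    (xbar : EuclideanSpace ℝ (Fin n))
    (hxbar : xbar = A⁻¹ • ∑ k ∈ range N, α (k + 1) • x (k + 1)) :
    f xbar - f xstar ≤
      R ^ 2 / A + (1 / A) * ∑ k ∈ range N, δt k +
        (2 / A) * ∑ k ∈ range N, α (k + 1) * δ k := by
  set d' := fun y => InnerProductSpace.toDual ℝ (EuclideanSpace ℝ (Fin n)) (Dd y)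
  obtain rfl : V = bregmanDiv d d' := funext₂ hV
  have hd' : ∀ y ∈ Q, HasFDerivWithinAt d (d' y) Q y := hd_diff
  have hd : StrongConvexOnWrt nrm Q d := ⟨hQconv, hd_strong⟩
  have hα_pos (k : ℕ) : 0 < α (k + 1) := by simpa [hα] using hL k
  choose _ _ hψ _ hψf using hmodel
  have hdescent_bregman (k : ℕ) : f (x (k + 1)) ≤ fδ k + ψ k (x (k + 1)) +
      (α (k + 1))⁻¹ * bregmanDiv d d' (x k) (x (k + 1)) + 2 * δ k := by
    have hquad := hd.half_sq_le_bregmanDiv (hd' _ (hxQ k)) (hxQ k) (hxQ (k + 1))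
    rw [hα, one_div, inv_inv]
    linarith [hdescent k, (hfδnext k).2, mul_le_mul_of_nonneg_left hquad (hL k).le]
  simp only [← hα] at hmin
  have hbound := adaptive_gradient_method_general_bound_general hfconv hd.convexOn hd' hN hxQ
    hα_pos hψ (fun k z hz => sub_nonneg.1 (hψf k z hz).1) hdescent_bregman
    (fun k => let ⟨h, hsub, hinexact⟩ := hmin k
      ⟨InnerProductSpace.toDual ℝ _ h, hsub, hinexact⟩) hxstarQ
  rw [centerMass, ← hA, ← hxbar] at hbound
  have hA_nonneg : 0 ≤ A := hA ▸ sum_nonneg fun k _ => (hα_pos k).le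
  calc f xbar - f xstar
      ≤ (R ^ 2 + ∑ k ∈ range N, (δt k + α (k + 1) * (2 * δ k))) / A :=
        hbound.trans (by gcongr)
    _ = _ := by simp only [sum_add_distrib, mul_left_comm _ (2 : ℝ), ← mul_sum]; ring
end

section
/- Adaptive fast gradient method with an inexact model (uniform constant). Under the hypotheses of the general bound for the adaptive fast gradient method, assume additionally that there is a constant L > 0 with L_{k+1} ≤ 2L for all 0 ≤ k ≤ N−1 (as is guaranteed when a (δ_k, L, ‖·‖)-model of f exists at every y_{k+1} and L_0 ≤ 2L). Then A_N ≥ (N+1)²/(8L) and f(x_N) − f(x_*) ≤ 8LR²/(N+1)² + 8L (Σ_{k=0}^{N-1} δ̃_k)/(N+1)² + (2 Σ_{k=0}^{N-1} δ_k A_{k+1})/A_N, where V[x_0](x_*) ≤ R². -/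
open Finset RealInnerProductSpace

/-!
The potential `A k * (f (x k) - f z) + V[u k](z)` grows in step `k` by at most
`δt k + 2 * δ k * A (k + 1)`, for every comparison point `z` of `Q`. Inexact optimality of
`u (k + 1)` and convexity of the model give a three-point inequality for `V`, which leaves the
term `-V[u k](u (k + 1))` to spare. By strong convexity of the prox-function this term absorbs the
quadratic error of the descent condition, since
`x (k + 1) - y (k + 1) = (α (k + 1) / A (k + 1)) • (u (k + 1) - u k)` and
`A (k + 1) = L (k + 1) * α (k + 1) ^ 2`.

If `L (k + 1) ≤ 2 * Lu` then `4 * A (k + 1) ≤ 8 * Lu * α (k + 1) ^ 2`, so that the square root of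
`8 * Lu * A k` grows by at least one in each step, and by two in the first.
-/

namespace AdaptiveFastGradient

open Filter Topology

lemma le_add_sum_of_succ_le {G : Type*} [AddCommGroup G] [PartialOrder G] [IsOrderedAddMonoid G]
    {P e : ℕ → G} (h : ∀ k, P (k + 1) ≤ P k + e k) (N : ℕ) :
    P N ≤ P 0 + ∑ k ∈ range N, e k := by
  rw [← sub_le_iff_le_add', ← sum_range_sub]
  exact sum_le_sum fun k _ ↦ sub_le_iff_le_add'.2 (h k)

section OrderedField

variable {K : Type*} [Field K] [LinearOrder K] [IsStrictOrderedRing K]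

lemma div_le_mul_div_of_le_mul {r M c A : K} (hr : 0 ≤ r) (hM : 0 < M) (hA : 0 < A)
    (h : M ≤ c * A) : r / A ≤ c * r / M := by
  rw [div_le_div_iff₀ hA hM]
  linarith [mul_le_mul_of_nonneg_left h hr]

lemma two_mul_add_two_le_mul {s c a α : K} (hc : 0 < c) (hα : 0 < α) (hsa : s ^ 2 ≤ c * a)
    (hroot : 4 * (a + α) ≤ c * α ^ 2) : 2 * s + 2 ≤ c * α := by
  have hcα : 0 < c * α := mul_pos hc hα
  have hsq : 4 * (s ^ 2 + c * α) ≤ (c * α) ^ 2 := by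
    linarith [mul_le_mul_of_nonneg_left hroot hc.le]
  have hfour : 4 ≤ c * α := by
    refine le_of_mul_le_mul_right ?_ hcα
    linarith [sq_nonneg s]
  have hsqrt : 2 * s ≤ c * α - 2 := by
    refine le_of_pow_le_pow_left₀ two_ne_zero (by linarith) ?_
    linarith
  linarith

end OrderedField

section StepSequence

/-- The step sizes `α` of the method and their partial sums `A`. The root of `A k + β = L β ^ 2` is
pinned down as the positive one, which for `A k ≥ 0` and `L > 0` is the largest. -/
structure IsStepSequence (L α A : ℕ → ℝ) : Prop where
  zero : A 0 = 0
  succ : ∀ k, A (k + 1) = A k + α (k + 1)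
  root : ∀ k, A (k + 1) = L (k + 1) * α (k + 1) ^ 2
  pos : ∀ k, 0 < α (k + 1)

lemma exists_pos_root {a l : ℝ} (ha : 0 ≤ a) (hl : 0 < l) : ∃ β, 0 < β ∧ a + β = l * β ^ 2 := by
  have hdiscrim : discrim l (-1) (-a) = √(1 + 4 * l * a) * √(1 + 4 * l * a) := by
    rw [Real.mul_self_sqrt (by positivity), discrim]
    ring
  have hroot := (quadratic_eq_zero_iff hl.ne' hdiscrim ((1 + √(1 + 4 * l * a)) / (2 * l))).2
    (Or.inl (by rw [neg_neg]))
  exact ⟨(1 + √(1 + 4 * l * a)) / (2 * l), by positivity, by linarith⟩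

variable {L α A : ℕ → ℝ}

lemma IsStepSequence.of_largest_root (hL : ∀ k, 0 < L (k + 1)) (hzero : A 0 = 0)
    (hroot : ∀ k, A k + α (k + 1) = L (k + 1) * α (k + 1) ^ 2 ∧
      ∀ β, A k + β = L (k + 1) * β ^ 2 → β ≤ α (k + 1))
    (hsucc : ∀ k, A (k + 1) = A k + α (k + 1)) : IsStepSequence L α A := by
  have hα : ∀ k, 0 ≤ A k → 0 < α (k + 1) := fun k hk ↦
    let ⟨β, hβ, hβroot⟩ := exists_pos_root hk (hL k)
    hβ.trans_le ((hroot k).2 β hβroot)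
  have hA : ∀ k, 0 ≤ A k := fun k ↦ by
    induction k with
    | zero => exact hzero.ge
    | succ k ih => exact hsucc k ▸ add_nonneg ih (hα k ih).le
  exact ⟨hzero, hsucc, fun k ↦ (hsucc k).trans (hroot k).1, fun k ↦ hα k (hA k)⟩

namespace IsStepSequence

lemma nonneg (h : IsStepSequence L α A) : ∀ k, 0 ≤ A k
  | 0 => h.zero.ge
  | k + 1 => h.succ k ▸ add_nonneg (h.nonneg k) (h.pos k).le

lemma pos_of_pos (h : IsStepSequence L α A) {k : ℕ} (hk : 0 < k) : 0 < A k := by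
  obtain ⟨k, rfl⟩ := Nat.exists_eq_add_one.2 hk
  exact h.succ k ▸ add_pos_of_nonneg_of_pos (h.nonneg k) (h.pos k)

lemma sq_le (h : IsStepSequence L α A) {Lu : ℝ} (hLu : 0 < Lu) {N : ℕ} (hN : 0 < N)
    (hL : ∀ k < N, L (k + 1) ≤ 2 * Lu) : ((N : ℝ) + 1) ^ 2 ≤ 8 * Lu * A N := by
  have hc : 0 < 8 * Lu := by positivity
  have hroot : ∀ k < N, 4 * (A k + α (k + 1)) ≤ 8 * Lu * α (k + 1) ^ 2 := fun k hk ↦ by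
    rw [← h.succ, h.root]
    linarith [mul_le_mul_of_nonneg_right (hL k hk) (sq_nonneg (α (k + 1)))]
  induction N, hN using Nat.le_induction with
  | base =>
    have hfour : 4 ≤ 8 * Lu * α 1 := by
      refine le_of_mul_le_mul_right ?_ (h.pos 0)
      linarith [hroot 0 one_pos, h.zero]
    rw [h.succ, h.zero]
    push_cast
    linarith
  | succ k _ ih =>
    have hk := ih (fun j hj ↦ hL j (by omega)) (fun j hj ↦ hroot j (by omega))
    have hα := two_mul_add_two_le_mul hc (h.pos k) hk (hroot k k.lt_succ_self)
    rw [h.succ, mul_add]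
    push_cast
    linarith

end IsStepSequence

end StepSequence

section InexactMinimizer

variable {F : Type*} [NormedAddCommGroup F] [InnerProductSpace ℝ F] {Q : Set F}

/-- `h` is a subgradient at `v` of the restriction of `φ` to `Q`. -/
def IsSubgradientOn (φ : F → ℝ) (Q : Set F) (h v : F) : Prop :=
  ∀ z ∈ Q, φ v + ⟪h, z - v⟫ ≤ φ z

/-- `v` is an `ε`-inexact minimizer of `φ` on `Q`, in the sense of an approximate first-order
optimality condition. -/
def IsInexactMinOn (φ : F → ℝ) (Q : Set F) (ε : ℝ) (v : F) : Prop :=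
  ∃ h, IsSubgradientOn φ Q h v ∧ ∀ z ∈ Q, -ε ≤ ⟪h, z - v⟫

variable [CompleteSpace F]

lemma tendsto_segment_slope (hQ : Convex ℝ Q) {d : F → ℝ} {g p q : F}
    (hd : HasGradientWithinAt d g Q p) (hp : p ∈ Q) (hq : q ∈ Q) :
    Tendsto (fun t : ℝ ↦ t⁻¹ * (d (p + t • (q - p)) - d p)) (𝓝[>] 0) (𝓝 ⟪g, q - p⟫) := by
  refine hd.hasFDerivWithinAt.lim (d := fun t : ℝ ↦ t • (q - p)) ?_ ?_ ?_
  · exact tendsto_nhdsWithin_of_tendsto_nhds (Continuous.tendsto' (by fun_prop) 0 0 (zero_smul ℝ _))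
  · filter_upwards [Ioo_mem_nhdsGT one_pos] with t ht
    exact hQ.add_smul_sub_mem hp hq ⟨ht.1.le, ht.2.le⟩
  · refine tendsto_const_nhds.congr' ?_
    filter_upwards [Ioo_mem_nhdsGT one_pos] with t ht
    rw [inv_smul_smul₀ ht.1.ne']

lemma IsSubgradientOn.sub_gradient {φ ψ : F → ℝ} {g h v : F}
    (hsub : IsSubgradientOn (fun z ↦ φ z + ψ z) Q h v) (hφ : HasGradientWithinAt φ g Q v)
    (hψ : ConvexOn ℝ Q ψ) (hv : v ∈ Q) : IsSubgradientOn ψ Q (h - g) v := by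
  intro z hz
  have hslope : ⟪h, z - v⟫ - (ψ z - ψ v) ≤ ⟪g, z - v⟫ := by
    refine ge_of_tendsto (tendsto_segment_slope hψ.1 hφ hv hz) ?_
    filter_upwards [Ioo_mem_nhdsGT one_pos] with t ht
    have hsubt := hsub _ (hψ.1.add_smul_sub_mem hv hz ⟨ht.1.le, ht.2.le⟩)
    have hconv := hψ.2 hv hz (sub_nonneg.2 ht.2.le) ht.1.le (sub_add_cancel 1 t)
    rw [show (1 - t) • v + t • z = v + t • (z - v) by module, smul_eq_mul, smul_eq_mul] at hconv
    rw [add_sub_cancel_left, inner_smul_right] at hsubt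
    rw [le_inv_mul_iff₀ ht.1]
    linarith
  rw [inner_sub_left]
  linarith

end InexactMinimizer

section Bregman

variable {F : Type*} [NormedAddCommGroup F] [InnerProductSpace ℝ F] {Q : Set F}
  {nrm d : F → ℝ} {D : F → F}

/-- The Bregman divergence `V[p](z)` of the prox-function `d`, whose gradient field `D` is passed
as a separate argument since `d` need only be differentiable within `Q`. -/
def bregman (d : F → ℝ) (D : F → F) (p z : F) : ℝ :=
  d z - d p - ⟪D p, z - p⟫

/-- `d` is 1-strongly convex on `Q` with respect to `nrm`, which need not be the norm of `F`. -/
def StronglyConvexOnWrt (nrm : F → ℝ) (Q : Set F) (d : F → ℝ) : Prop :=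
  Convex ℝ Q ∧ ∀ z ∈ Q, ∀ w ∈ Q, ∀ t ∈ Set.Icc (0 : ℝ) 1,
    d (t • z + (1 - t) • w) ≤ t * d z + (1 - t) * d w - t * (1 - t) / 2 * nrm (z - w) ^ 2

lemma bregman_three_point (d : F → ℝ) (D : F → F) (p v z : F) :
    bregman d D p z = bregman d D p v + bregman d D v z + ⟪D v - D p, z - v⟫ := by
  rw [bregman, bregman, bregman, ← sub_add_sub_cancel z v p, inner_add_right, inner_sub_left]
  ring

variable [CompleteSpace F]

lemma hasGradientWithinAt_bregman {p v : F} (hd : HasGradientWithinAt d (D v) Q v) :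
    HasGradientWithinAt (bregman d D p) (D v - D p) Q v := by
  have hlin : HasFDerivWithinAt (fun z ↦ ⟪D p, z - p⟫) (innerSL ℝ (D p)) Q v := by
    simpa only [inner_sub_right, innerSL_apply_apply] using
      (innerSL ℝ (D p)).hasFDerivWithinAt.sub_const ⟪D p, p⟫
  rw [hasGradientWithinAt_iff_hasFDerivWithinAt, map_sub]
  exact (hd.hasFDerivWithinAt.sub_const (d p)).sub hlin

lemma half_sq_le_bregman {p z : F} (hstrong : StronglyConvexOnWrt nrm Q d)
    (hd : HasGradientWithinAt d (D p) Q p) (hp : p ∈ Q) (hz : z ∈ Q) :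
    nrm (z - p) ^ 2 / 2 ≤ bregman d D p z := by
  have hupper : Tendsto (fun t : ℝ ↦ d z - d p - (1 - t) / 2 * nrm (z - p) ^ 2) (𝓝[>] 0)
      (𝓝 (d z - d p - nrm (z - p) ^ 2 / 2)) :=
    tendsto_nhdsWithin_of_tendsto_nhds (Continuous.tendsto' (by fun_prop) _ _ (by ring))
  have hslope : ⟪D p, z - p⟫ ≤ d z - d p - nrm (z - p) ^ 2 / 2 := by
    refine le_of_tendsto_of_tendsto (tendsto_segment_slope hstrong.1 hd hp hz) hupper ?_
    filter_upwards [Ioo_mem_nhdsGT one_pos] with t ht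
    have hconv := hstrong.2 z hz p hp t ⟨ht.1.le, ht.2.le⟩
    rw [show t • z + (1 - t) • p = p + t • (z - p) by module] at hconv
    rw [inv_mul_le_iff₀ ht.1]
    linarith
  rw [bregman]
  linarith

lemma IsInexactMinOn.three_point {ψ : F → ℝ} {p v z : F} {ε : ℝ}
    (hmin : IsInexactMinOn (fun w ↦ bregman d D p w + ψ w) Q ε v)
    (hd : HasGradientWithinAt d (D v) Q v) (hψ : ConvexOn ℝ Q ψ) (hv : v ∈ Q) (hz : z ∈ Q) :
    bregman d D p v + ψ v + bregman d D v z ≤ bregman d D p z + ψ z + ε := by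
  obtain ⟨h, hsub, hε⟩ := hmin
  have hψsub := hsub.sub_gradient (hasGradientWithinAt_bregman hd) hψ hv z hz
  rw [inner_sub_left] at hψsub
  linarith [bregman_three_point d D p v z, hε z hz]

end Bregman

section Averaging

variable {E : Type*} [AddCommGroup E] [Module ℝ E] {Q : Set E} {nrm ψ : E → ℝ} {x u u' : E}
  {a b α l : ℝ}

lemma mul_map_weighted_mean_le (hψ : ConvexOn ℝ Q ψ) (hu : u ∈ Q) (hx : x ∈ Q) (hα : 0 ≤ α)
    (ha : 0 ≤ a) (hpos : 0 < α + a) :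
    (α + a) * ψ ((α + a)⁻¹ • (α • u + a • x)) ≤ α * ψ u + a * ψ x := by
  have hconv := (convexOn_iff_div.1 hψ).2 hu hx hα ha hpos
  simp only [div_eq_inv_mul, mul_smul, ← smul_add, smul_eq_mul, mul_assoc, ← mul_add] at hconv
  rwa [le_inv_mul_iff₀ hpos] at hconv

lemma mul_quadratic_error_eq (hnrm : ∀ (c : ℝ) w, nrm (c • w) = |c| * nrm w) (hb : b ≠ 0)
    (hroot : b = l * α ^ 2) :
    b * (l / 2 * nrm (b⁻¹ • (α • u' + a • x) - b⁻¹ • (α • u + a • x)) ^ 2) =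
      nrm (u' - u) ^ 2 / 2 := by
  have hdiff : b⁻¹ • (α • u' + a • x) - b⁻¹ • (α • u + a • x) = (b⁻¹ * α) • (u' - u) := by module
  rw [hdiff, hnrm, mul_pow, sq_abs]
  calc b * (l / 2 * ((b⁻¹ * α) ^ 2 * nrm (u' - u) ^ 2))
      = b⁻¹ * (l * α ^ 2) * (b * b⁻¹) * (nrm (u' - u) ^ 2 / 2) := by ring
    _ = nrm (u' - u) ^ 2 / 2 := by rw [← hroot, inv_mul_cancel₀ hb, mul_inv_cancel₀ hb]; ring

end Averaging

section FastGradient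

variable {F : Type*} [NormedAddCommGroup F] [InnerProductSpace ℝ F] [CompleteSpace F] {Q : Set F}
  {nrm f d ψ : F → ℝ} {D : F → F} {x x' y u u' z : F} {a b α l m ε ε' : ℝ}

/-- `m + ψ` is the model, and `ε` collects all errors of the descent condition. -/
lemma potential_step (hnrm : ∀ (c : ℝ) w, nrm (c • w) = |c| * nrm w)
    (hd : ∀ w ∈ Q, HasGradientWithinAt d (D w) Q w) (hstrong : StronglyConvexOnWrt nrm Q d)
    (hψ : ConvexOn ℝ Q ψ) (hmodel : ∀ w ∈ Q, m + ψ w ≤ f w)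
    (hxQ : x ∈ Q) (huQ : u ∈ Q) (huQ' : u' ∈ Q) (hz : z ∈ Q) (ha : 0 ≤ a) (hα : 0 < α)
    (hb : b = a + α) (hroot : b = l * α ^ 2) (hy : y = b⁻¹ • (α • u + a • x))
    (hx' : x' = b⁻¹ • (α • u' + a • x))
    (hmin : IsInexactMinOn (fun w ↦ bregman d D u w + α * ψ w) Q ε' u')
    (hdescent : f x' ≤ m + ψ x' + l / 2 * nrm (x' - y) ^ 2 + ε) :
    b * (f x' - f z) + bregman d D u' z ≤ a * (f x - f z) + bregman d D u z + (ε' + b * ε) := by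
  have hbpos : 0 < b := by linarith
  have hmean : b * ψ x' ≤ α * ψ u' + a * ψ x := by
    rw [hx', hb, add_comm a α]
    exact mul_map_weighted_mean_le hψ huQ' hxQ hα.le ha (by linarith)
  have herror : b * (l / 2 * nrm (x' - y) ^ 2) ≤ bregman d D u u' := by
    rw [hx', hy, mul_quadratic_error_eq hnrm hbpos.ne' hroot]
    exact half_sq_le_bregman hstrong (hd u huQ) huQ huQ'
  have hthree := hmin.three_point (hd u' huQ') (hψ.smul hα.le) huQ' hz
  have hfx' : b * f x' ≤ a * f x + α * f z + bregman d D u z - bregman d D u' z + ε' + b * ε :=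
    calc b * f x'
        ≤ b * (m + ψ x' + l / 2 * nrm (x' - y) ^ 2 + ε) := by gcongr
      _ = b * m + b * ψ x' + b * (l / 2 * nrm (x' - y) ^ 2) + b * ε := by ring
      _ ≤ b * m + (α * ψ u' + a * ψ x) + bregman d D u u' + b * ε := by gcongr
      _ ≤ b * m + a * ψ x + (α * ψ z + bregman d D u z - bregman d D u' z + ε') + b * ε := by
        linarith
      _ = a * (m + ψ x) + α * (m + ψ z) + bregman d D u z - bregman d D u' z + ε' + b * ε := by
        rw [hb]; ring
      _ ≤ a * f x + α * f z + bregman d D u z - bregman d D u' z + ε' + b * ε := by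
        gcongr
        exacts [hmodel x hxQ, hmodel z hz]
  rw [hb] at hfx' ⊢
  linarith

end FastGradient

end AdaptiveFastGradient

open AdaptiveFastGradient

theorem adaptive_fast_gradient_method_uniform_constant_general
    {F : Type*} [NormedAddCommGroup F] [InnerProductSpace ℝ F] [CompleteSpace F]
    {Q : Set F} {f nrm d : F → ℝ} {D : F → F}
    (hnrm : ∀ (c : ℝ) w, nrm (c • w) = |c| * nrm w)
    (hd : ∀ w ∈ Q, HasGradientWithinAt d (D w) Q w) (hstrong : StronglyConvexOnWrt nrm Q d)
    {N : ℕ} (hN : 0 < N) {x y u : ℕ → F} (hxQ : ∀ k, x k ∈ Q) (huQ : ∀ k, u k ∈ Q)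
    (hinit : u 0 = x 0) {δ δt L α A : ℕ → ℝ} (hδt : ∀ k, 0 ≤ δt k) (hA : IsStepSequence L α A)
    (hy : ∀ k, y (k + 1) = (A (k + 1))⁻¹ • (α (k + 1) • u k + A k • x k))
    (hx : ∀ k, x (k + 1) = (A (k + 1))⁻¹ • (α (k + 1) • u (k + 1) + A k • x k))
    {ψ : ℕ → F → ℝ} {m : ℕ → ℝ} (hψ : ∀ k, ConvexOn ℝ Q (ψ k))
    (hmodel : ∀ k, ∀ w ∈ Q, m k + ψ k w ≤ f w)
    (hdescent : ∀ k, f (x (k + 1)) ≤ m k + ψ k (x (k + 1)) +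
      L (k + 1) / 2 * nrm (x (k + 1) - y (k + 1)) ^ 2 + 2 * δ k)
    (hmin : ∀ k, IsInexactMinOn (fun w ↦ bregman d D (u k) w + α (k + 1) * ψ k w) Q (δt k)
      (u (k + 1)))
    {z : F} (hz : z ∈ Q) {R : ℝ} (hR : bregman d D (x 0) z ≤ R ^ 2)
    {Lu : ℝ} (hLu : 0 < Lu) (hLuniform : ∀ k < N, L (k + 1) ≤ 2 * Lu) :
    A N ≥ (N + 1) ^ 2 / (8 * Lu) ∧
    f (x N) - f z ≤
      8 * Lu * R ^ 2 / (N + 1) ^ 2 + 8 * Lu * (∑ k ∈ range N, δt k) / (N + 1) ^ 2 +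
        (2 * ∑ k ∈ range N, δ k * A (k + 1)) / A N := by
  have hAN := hA.sq_le hLu hN hLuniform
  have hpos := hA.pos_of_pos hN
  refine ⟨(div_le_iff₀' (by positivity)).2 hAN, ?_⟩
  have hsum := le_add_sum_of_succ_le (P := fun k ↦ A k * (f (x k) - f z) + bregman d D (u k) z)
    (fun k ↦ potential_step hnrm hd hstrong (hψ k) (hmodel k) (hxQ k) (huQ k) (huQ (k + 1)) hz
      (hA.nonneg k) (hA.pos k) (hA.succ k) (hA.root k) (hy k) (hx k) (hmin k) (hdescent k)) N
  have hV : 0 ≤ bregman d D (u N) z :=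
    (by positivity : 0 ≤ nrm (z - u N) ^ 2 / 2).trans
      (half_sq_le_bregman hstrong (hd _ (huQ N)) (huQ N) hz)
  have hbudget : 0 ≤ R ^ 2 + ∑ k ∈ range N, δt k :=
    add_nonneg (sq_nonneg R) (sum_nonneg fun k _ ↦ hδt k)
  have herr : ∑ k ∈ range N, A (k + 1) * (2 * δ k) = 2 * ∑ k ∈ range N, δ k * A (k + 1) := by
    rw [mul_sum]
    exact sum_congr rfl fun k _ ↦ by ring
  simp only [sum_add_distrib, herr, hA.zero, hinit, zero_mul, zero_add] at hsum
  calc f (x N) - f z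
      ≤ (R ^ 2 + ∑ k ∈ range N, δt k + 2 * ∑ k ∈ range N, δ k * A (k + 1)) / A N := by
        rw [le_div_iff₀ hpos]; linarith
    _ = (R ^ 2 + ∑ k ∈ range N, δt k) / A N + (2 * ∑ k ∈ range N, δ k * A (k + 1)) / A N :=
        add_div _ _ _
    _ ≤ 8 * Lu * (R ^ 2 + ∑ k ∈ range N, δt k) / (N + 1) ^ 2 +
          (2 * ∑ k ∈ range N, δ k * A (k + 1)) / A N := by
        gcongr ?_ + _
        exact div_le_mul_div_of_le_mul hbudget (by positivity) hpos hAN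
    _ = _ := by rw [mul_add, add_div]

/-- **Adaptive fast gradient method with an inexact model (uniform constant).**
`ψ k` is the model `ψ_{δ_k}(·, y_{k+1})` with value `fδ k = f_{δ_k}(y_{k+1})`. -/
theorem adaptive_fast_gradient_method_uniform_constant
    {n : ℕ} (Q : Set (EuclideanSpace ℝ (Fin n)))
    (hQne : Q.Nonempty) (hQclosed : IsClosed Q) (hQconv : Convex ℝ Q)
    (f : EuclideanSpace ℝ (Fin n) → ℝ) (hfconv : ConvexOn ℝ Q f)
    -- a general norm `nrm` on `ℝⁿ`
    (nrm : EuclideanSpace ℝ (Fin n) → ℝ)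
    (hnrm_zero : ∀ z, nrm z = 0 ↔ z = 0)
    (hnrm_smul : ∀ (c : ℝ) z, nrm (c • z) = |c| * nrm z)
    (hnrm_add : ∀ z w, nrm (z + w) ≤ nrm z + nrm w)
    -- the prox-function `d`, continuously differentiable and 1-strongly convex w.r.t. `nrm`
    (d : EuclideanSpace ℝ (Fin n) → ℝ)
    (Dd : EuclideanSpace ℝ (Fin n) → EuclideanSpace ℝ (Fin n))
    (hd_diff : ∀ z ∈ Q, HasGradientWithinAt d (Dd z) Q z)
    (hd_cont : ContinuousOn Dd Q)
    (hd_strong : ∀ z ∈ Q, ∀ w ∈ Q, ∀ t : ℝ, t ∈ Set.Icc (0 : ℝ) 1 →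
      d (t • z + (1 - t) • w) ≤
        t * d z + (1 - t) * d w - t * (1 - t) / 2 * nrm (z - w) ^ 2)
    -- Bregman divergence
    (V : EuclideanSpace ℝ (Fin n) → EuclideanSpace ℝ (Fin n) → ℝ)
    (hV : ∀ y z, V y z = d z - d y - ⟪Dd y, z - y⟫)
    -- the method data
    (N : ℕ) (hN : 0 < N)
    (x y u : ℕ → EuclideanSpace ℝ (Fin n))
    (hxQ : ∀ k, x k ∈ Q) (hyQ : ∀ k, y k ∈ Q) (huQ : ∀ k, u k ∈ Q)
    (hinit : y 0 = x 0 ∧ u 0 = x 0)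
    (δ δt : ℕ → ℝ) (hδ : ∀ k, 0 ≤ δ k) (hδt : ∀ k, 0 ≤ δt k)
    (L : ℕ → ℝ) (hL : ∀ k, 0 < L (k + 1))
    (α A : ℕ → ℝ) (hα0 : α 0 = 0) (hA0 : A 0 = 0)
    -- `α_{k+1}` is the largest root of `A_k + α = L_{k+1} α²`
    (hαroot : ∀ k, A k + α (k + 1) = L (k + 1) * α (k + 1) ^ 2 ∧
      ∀ β : ℝ, A k + β = L (k + 1) * β ^ 2 → β ≤ α (k + 1))
    (hArec : ∀ k, A (k + 1) = A k + α (k + 1))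
    (hy : ∀ k, y (k + 1) = (A (k + 1))⁻¹ • (α (k + 1) • u k + A k • x k))
    -- `ψ k = ψ_{δ_k}(·, y_{k+1})` with value `fδ k = f_{δ_k}(y_{k+1})`:
    -- a `(δ_k, L̄_{k+1}, nrm)`-model of `f` at `y_{k+1}` for some `L̄_{k+1} > 0`
    (ψ : ℕ → EuclideanSpace ℝ (Fin n) → ℝ) (fδ : ℕ → ℝ)
    (hmodel : ∀ k, ∃ Lbar : ℝ, 0 < Lbar ∧
      ConvexOn ℝ Q (ψ k) ∧ ψ k (y (k + 1)) = 0 ∧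
      ∀ z ∈ Q, 0 ≤ f z - (fδ k + ψ k z) ∧
        f z - (fδ k + ψ k z) ≤ Lbar / 2 * nrm (z - y (k + 1)) ^ 2 + δ k)
    -- the value of the model at the next iterate (`f_{δ_k}(x_{k+1})`)
    (fδnext : ℕ → ℝ)
    (hfδnext : ∀ k, 0 ≤ f (x (k + 1)) - fδnext k ∧
      f (x (k + 1)) - fδnext k ≤ δ k)
    -- descent condition
    (hdescent : ∀ k, fδnext k ≤ fδ k + ψ k (x (k + 1)) +
      L (k + 1) / 2 * nrm (x (k + 1) - y (k + 1)) ^ 2 + δ k)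
    -- `u_{k+1}` is a `δ̃_k`-inexact minimizer of `φ_{k+1}(z) = V (u k) z + α_{k+1} ψ k z` on `Q`
    (hmin : ∀ k, ∃ h : EuclideanSpace ℝ (Fin n),
      (∀ z ∈ Q, V (u k) z + α (k + 1) * ψ k z ≥
        V (u k) (u (k + 1)) + α (k + 1) * ψ k (u (k + 1)) + ⟪h, z - u (k + 1)⟫) ∧
      (∀ z ∈ Q, ⟪h, z - u (k + 1)⟫ ≥ -δt k))
    (hx : ∀ k, x (k + 1) = (A (k + 1))⁻¹ • (α (k + 1) • u (k + 1) + A k • x k))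
    -- the optimum
    (xstar : EuclideanSpace ℝ (Fin n)) (hxstarQ : xstar ∈ Q)
    (hxstar : ∀ z ∈ Q, f xstar ≤ f z)
    (R : ℝ) (hR : V (x 0) xstar ≤ R ^ 2)
    -- uniform bound on the adaptive constants
    (Lu : ℝ) (hLu : 0 < Lu) (hLuniform : ∀ k < N, L (k + 1) ≤ 2 * Lu) :
    A N ≥ (N + 1) ^ 2 / (8 * Lu) ∧
    f (x N) - f xstar ≤
      8 * Lu * R ^ 2 / (N + 1) ^ 2 + 8 * Lu * (∑ k ∈ range N, δt k) / (N + 1) ^ 2 +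
        (2 * ∑ k ∈ range N, δ k * A (k + 1)) / A N := by
  obtain rfl : V = bregman d Dd := funext₂ hV
  choose Lbar _ hψ _ hbounds using hmodel
  exact adaptive_fast_gradient_method_uniform_constant_general hnrm_smul hd_diff
    ⟨hQconv, hd_strong⟩ hN hxQ huQ hinit.2 hδt (IsStepSequence.of_largest_root hL hA0 hαroot hArec)
    hy hx hψ (fun k w hw ↦ sub_nonneg.1 (hbounds k w hw).1)
    (fun k ↦ by linarith [(hfδnext k).2, hdescent k]) hmin hxstarQ hR hLu hLuniform
end

section
/- Fast gradient method with a (δ₁, δ₂, L, ‖·‖₂)-model (deterministic bound). Let x_0 = y_0 = u_0 ∈ Q, A_0 = α_0 = 0, L > 0, and for k ≥ 0: let α_{k+1} be the largest root of A_k + α = L α², A_{k+1} = A_k + α_{k+1}, y_{k+1} = (α_{k+1} u_k + A_k x_k)/A_{k+1}, u_{k+1} = argmin_{x∈Q} [ (1/2)‖x − u_k‖₂² + α_{k+1} ψ_k(x, y_{k+1}) ], and x_{k+1} = (α_{k+1} u_{k+1} + A_k x_k)/A_{k+1}. Suppose for every k the function ψ_k(·, y_{k+1}) is a (δ₁^k,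 δ₂^k, L, ‖·‖₂)-model of f at y_{k+1}. Let x_* be a minimizer of f on Q with (1/2)‖x_* − x_0‖₂² ≤ R². Then f(x_N) − f(x_*) ≤ 4LR²/N² + (1/A_N) Σ_{k=0}^{N-1} A_k δ₁^k(x_k, y_{k+1}) + (1/A_N) Σ_{k=0}^{N-1} α_{k+1} δ₁^k(x_*, y_{k+1}) + (1/A_N) Σ_{k=0}^{N-1} A_{k+1} δ₂^k. -/
open Finset RealInnerProductSpace

/-!
The potential `A k * (f (x k) - f z) + ‖z - u k‖ ^ 2 / 2` grows in each step by at most the model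
errors. The proximal objective is `1`-strongly convex, so its minimality at `u (k + 1)` yields a
spare `‖z - u (k + 1)‖ ^ 2 / 2`. Moreover `x (k + 1) - y (k + 1) = (a / A) • (u (k + 1) - u k)` with
`a = α (k + 1)`, `A = A (k + 1)`, and `A = L * a ^ 2`; hence `A` times the quadratic error
`L / 2 * ‖x (k + 1) - y (k + 1)‖ ^ 2` is exactly the `‖u (k + 1) - u k‖ ^ 2 / 2` of the proximal
objective, and the two cancel. The rate comes from `2 * L * α k + 1 ≤ 2 * L * α (k + 1)`, which
gives `N ^ 2 ≤ 4 * L * A N`.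
-/

section StrongConvexity

theorem add_modulus_le_of_uniformConvexOn_of_isMinOn {E : Type*} [NormedAddCommGroup E]
    [NormedSpace ℝ E] {s : Set E} {ω : ℝ → ℝ} {g : E → ℝ} {v z : E} (hg : UniformConvexOn s ω g)
    (hmin : IsMinOn g s v) (hv : v ∈ s) (hz : z ∈ s) : g v + ω ‖z - v‖ ≤ g z := by
  have segment : ∀ t ∈ Set.Ioo (0 : ℝ) 1, (1 - t) * ω ‖z - v‖ ≤ g z - g v := by
    rintro t ⟨ht₀, ht₁⟩
    have hle := (isMinOn_iff.1 hmin _ (hg.1 hz hv ht₀.le (sub_pos.2 ht₁).le (by ring))).trans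
      (hg.2 hz hv ht₀.le (sub_pos.2 ht₁).le (by ring))
    simp only [smul_eq_mul] at hle
    exact le_of_mul_le_mul_left (by linarith) ht₀
  have limit : Filter.Tendsto (fun t : ℝ ↦ (1 - t) * ω ‖z - v‖) (nhdsWithin 0 (Set.Ioi 0))
      (nhds (ω ‖z - v‖)) := by
    have hcont : Continuous fun t : ℝ ↦ (1 - t) * ω ‖z - v‖ := by fun_prop
    simpa using (hcont.tendsto 0).mono_left nhdsWithin_le_nhds
  have hle : ω ‖z - v‖ ≤ g z - g v :=
    le_of_tendsto limit (Filter.mem_of_superset (Ioo_mem_nhdsGT one_pos) segment)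
  linarith

variable {E : Type*} [NormedAddCommGroup E] [InnerProductSpace ℝ E] {s : Set E} {g : E → ℝ}

theorem strongConvexOn_sq_norm_sub_add (hg : ConvexOn ℝ s g) (m : ℝ) (u : E) :
    StrongConvexOn s m fun w ↦ m / 2 * ‖w - u‖ ^ 2 + g w := by
  have expand : (fun w ↦ m / 2 * ‖w - u‖ ^ 2 + g w - m / 2 * ‖w‖ ^ 2) =
      g + (innerₛₗ ℝ (-m • u) : E → ℝ) + fun _ ↦ m / 2 * ‖u‖ ^ 2 := by
    funext w
    simp only [Pi.add_apply, innerₛₗ_apply_apply, real_inner_smul_left, norm_sub_sq_real,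
      real_inner_comm u w]
    ring
  rw [strongConvexOn_iff_convex, expand]
  exact (hg.add ((innerₛₗ ℝ (-m • u)).convexOn hg.1)).add (convexOn_const _ hg.1)

theorem sq_norm_sub_three_point_of_isMinOn (hg : ConvexOn ℝ s g) {m : ℝ} {u v z : E}
    (hmin : IsMinOn (fun w ↦ m / 2 * ‖w - u‖ ^ 2 + g w) s v) (hv : v ∈ s) (hz : z ∈ s) :
    m / 2 * ‖v - u‖ ^ 2 + g v + m / 2 * ‖z - v‖ ^ 2 ≤ m / 2 * ‖z - u‖ ^ 2 + g z :=
  add_modulus_le_of_uniformConvexOn_of_isMinOn (strongConvexOn_sq_norm_sub_add hg m u) hmin hv hz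

end StrongConvexity

section WeightedMean

variable {E : Type*} [AddCommGroup E] [Module ℝ E] {s : Set E} {a b : ℝ} {v x : E}

theorem inv_smul_add_mem_of_convex (hs : Convex ℝ s) (hv : v ∈ s) (hx : x ∈ s) (ha : 0 ≤ a)
    (hb : 0 ≤ b) (hab : 0 < a + b) : (a + b)⁻¹ • (a • v + b • x) ∈ s := by
  have hmem := convex_iff_div.1 hs hv hx ha hb hab
  rwa [div_eq_inv_mul, div_eq_inv_mul, mul_smul, mul_smul, ← smul_add] at hmem

theorem add_mul_map_inv_smul_add_le_of_convexOn {g : E → ℝ} (hg : ConvexOn ℝ s g) (hv : v ∈ s)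
    (hx : x ∈ s) (ha : 0 ≤ a) (hb : 0 ≤ b) (hab : 0 < a + b) :
    (a + b) * g ((a + b)⁻¹ • (a • v + b • x)) ≤ a * g v + b * g x := by
  have hle := (convexOn_iff_div.1 hg).2 hv hx ha hb hab
  rw [div_eq_inv_mul, div_eq_inv_mul, mul_smul, mul_smul, ← smul_add, mul_smul, mul_smul,
    ← smul_add] at hle
  simpa only [smul_eq_mul, inv_mul_eq_div, le_div_iff₀' hab] using hle

end WeightedMean

theorem add_mul_sq_norm_inv_smul_add_sub {E : Type*} [NormedAddCommGroup E] [NormedSpace ℝ E]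
    {L a b : ℝ} (hab : a + b ≠ 0) (hroot : a + b = L * a ^ 2) (u v x : E) :
    (a + b) * (L / 2 * ‖(a + b)⁻¹ • (a • v + b • x) - (a + b)⁻¹ • (a • u + b • x)‖ ^ 2) =
      1 / 2 * ‖v - u‖ ^ 2 := by
  have hsub : (a + b)⁻¹ • (a • v + b • x) - (a + b)⁻¹ • (a • u + b • x) =
      ((a + b)⁻¹ * a) • (v - u) := by module
  have hcoef : (a + b) * (L * ((a + b)⁻¹ * a) ^ 2) = 1 := by
    field_simp
    linarith
  rw [hsub, norm_smul, mul_pow, Real.norm_eq_abs, sq_abs]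
  linear_combination (1 / 2) * ‖v - u‖ ^ 2 * hcoef

section InexactModel

variable {E : Type*} [NormedAddCommGroup E] [NormedSpace ℝ E] {Q : Set E}

/-- `φ` is a `(δ₁, δ₂, L, ‖·‖)`-model of `f` on `Q` at `y`; it plays the role of `ψ(·, y)`. The
error `δ₁` is a function on all of `E × E`, of which only the values on `Q × {y}` matter. -/
structure IsInexactModel (Q : Set E) (f φ : E → ℝ) (δ₁ : E → E → ℝ) (δ₂ L : ℝ) (y : E) :
    Prop where
  convexOn : ConvexOn ℝ Q φ
  self_eq_zero : φ y = 0
  neg_le_sub : ∀ z ∈ Q, -δ₁ z y ≤ f z - (f y + φ z)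
  sub_le : ∀ z ∈ Q, f z - (f y + φ z) ≤ L / 2 * ‖z - y‖ ^ 2 + δ₂

theorem IsInexactModel.add_mul_map_inv_smul_add_le {f φ : E → ℝ} {δ₁ : E → E → ℝ}
    {δ₂ L a b : ℝ} {x x' y v z : E} (h : IsInexactModel Q f φ δ₁ δ₂ L y) (hx : x ∈ Q)
    (hv : v ∈ Q) (hz : z ∈ Q) (ha : 0 ≤ a) (hb : 0 ≤ b) (hab : 0 < a + b)
    (hx' : x' = (a + b)⁻¹ • (a • v + b • x)) :
    (a + b) * f x' ≤ a * (f z + φ v - φ z + δ₁ z y) + b * (f x + δ₁ x y) +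
      (a + b) * (L / 2 * ‖x' - y‖ ^ 2 + δ₂) := by
  have hconv : (a + b) * φ x' ≤ a * φ v + b * φ x :=
    hx' ▸ add_mul_map_inv_smul_add_le_of_convexOn h.convexOn hv hx ha hb hab
  have hx'Q : x' ∈ Q := hx' ▸ inv_smul_add_mem_of_convex h.convexOn.1 hv hx ha hb hab
  have upper := mul_le_mul_of_nonneg_left (h.sub_le x' hx'Q) hab.le
  have lower_x := mul_le_mul_of_nonneg_left (h.neg_le_sub x hx) hb
  have lower_z := mul_le_mul_of_nonneg_left (h.neg_le_sub z hz) ha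
  linarith

end InexactModel

section StepSizes

variable {L : ℝ}

theorem two_mul_mul_add_one_le_of_isGreatest {s a : ℝ} (hL : 0 < L)
    (ha : IsGreatest {β | L * s ^ 2 + β = L * β ^ 2} a) : 2 * L * s + 1 ≤ 2 * L * a := by
  have hroot : L * s ^ 2 + a = L * a ^ 2 := ha.1
  have other_root : L * s ^ 2 + (1 / L - a) = L * (1 / L - a) ^ 2 := by
    field_simp
    linear_combination L * hroot
  have right_of_vertex : 0 ≤ 2 * L * a - 1 := by
    have hle : 1 / L ≤ 2 * a := by linarith [ha.2 other_root]
    rw [div_le_iff₀ hL] at hle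
    linarith
  have discriminant : (2 * L * a - 1) ^ 2 = (2 * L * s) ^ 2 + 1 := by
    linear_combination -4 * L * hroot
  linarith [le_of_sq_le_sq (by linarith : (2 * L * s) ^ 2 ≤ (2 * L * a - 1) ^ 2) right_of_vertex]

/-- The step sizes `α` of the fast gradient method and their partial sums `A`: `α (k + 1)` is the
largest root of `A k + β = L * β ^ 2`. -/
structure IsFastGradientStepSize (L : ℝ) (α A : ℕ → ℝ) : Prop where
  step_zero : α 0 = 0
  sum_zero : A 0 = 0
  isGreatest : ∀ k, IsGreatest {β | A k + β = L * β ^ 2} (α (k + 1))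
  sum_succ : ∀ k, A (k + 1) = A k + α (k + 1)

namespace IsFastGradientStepSize

variable {α A : ℕ → ℝ}

theorem sum_eq_mul_sq (h : IsFastGradientStepSize L α A) : ∀ k, A k = L * α k ^ 2
  | 0 => by simp [h.step_zero, h.sum_zero]
  | k + 1 => (h.sum_succ k).trans (h.isGreatest k).1

theorem natCast_le_two_mul_step (h : IsFastGradientStepSize L α A) (hL : 0 < L) (k : ℕ) :
    (k : ℝ) ≤ 2 * L * α k := by
  induction k with
  | zero => simp [h.step_zero]
  | succ k ih =>
    have growth := two_mul_mul_add_one_le_of_isGreatest hL (h.sum_eq_mul_sq k ▸ h.isGreatest k)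
    push_cast
    linarith

theorem step_nonneg (h : IsFastGradientStepSize L α A) (hL : 0 < L) (k : ℕ) : 0 ≤ α k :=
  nonneg_of_mul_nonneg_right (k.cast_nonneg.trans (h.natCast_le_two_mul_step hL k))
    (by positivity)

theorem sum_nonneg (h : IsFastGradientStepSize L α A) (hL : 0 < L) (k : ℕ) : 0 ≤ A k := by
  rw [h.sum_eq_mul_sq]
  positivity

theorem natCast_sq_le_four_mul_sum (h : IsFastGradientStepSize L α A) (hL : 0 < L) (k : ℕ) :
    (k : ℝ) ^ 2 ≤ 4 * L * A k :=
  calc (k : ℝ) ^ 2 ≤ (2 * L * α k) ^ 2 := by gcongr; exact h.natCast_le_two_mul_step hL k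
    _ = 4 * L * A k := by rw [h.sum_eq_mul_sq]; ring

theorem sum_pos (h : IsFastGradientStepSize L α A) (hL : 0 < L) {k : ℕ} (hk : 0 < k) :
    0 < A k :=
  pos_of_mul_pos_right
    (lt_of_lt_of_le (by positivity) (h.natCast_sq_le_four_mul_sum hL k)) (by positivity)

end IsFastGradientStepSize

end StepSizes

section FastGradient

variable {E : Type*} [NormedAddCommGroup E] [InnerProductSpace ℝ E] {Q : Set E}

/-- The iterates `x`, `y`, `u` of the fast gradient method on `Q`, where `ψ k` stands for the model
`ψ_k(·, y_{k+1})`. The value `y 0` is left free, since the iteration starts with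
`y 1`. -/
structure IsFastGradientRun (Q : Set E) (L : ℝ) (ψ : ℕ → E → ℝ) (α A : ℕ → ℝ)
    (x y u : ℕ → E) : Prop extends IsFastGradientStepSize L α A where
  x_zero_mem : x 0 ∈ Q
  u_zero : u 0 = x 0
  y_succ : ∀ k, y (k + 1) = (A (k + 1))⁻¹ • (α (k + 1) • u k + A k • x k)
  u_succ_mem : ∀ k, u (k + 1) ∈ Q
  isMinOn_u_succ : ∀ k,
    IsMinOn (fun z ↦ 1 / 2 * ‖z - u k‖ ^ 2 + α (k + 1) * ψ k z) Q (u (k + 1))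
  x_succ : ∀ k, x (k + 1) = (A (k + 1))⁻¹ • (α (k + 1) • u (k + 1) + A k • x k)

/-- The Lyapunov function of the fast gradient method, relative to a comparison point `z`. -/
noncomputable def fastGradientPotential (f : E → ℝ) (z : E) (A : ℕ → ℝ) (x u : ℕ → E)
    (k : ℕ) : ℝ :=
  A k * (f (x k) - f z) + 1 / 2 * ‖z - u k‖ ^ 2

namespace IsFastGradientRun

variable {f : E → ℝ} {L : ℝ} {ψ : ℕ → E → ℝ} {α A : ℕ → ℝ} {x y u : ℕ → E}
  {δ₁ : ℕ → E → E → ℝ} {δ₂ : ℕ → ℝ} {z : E}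

theorem x_mem (h : IsFastGradientRun Q L ψ α A x y u) (hL : 0 < L) (hQ : Convex ℝ Q) :
    ∀ k, x k ∈ Q
  | 0 => h.x_zero_mem
  | k + 1 => by
    have hA : A (k + 1) = α (k + 1) + A k := by rw [h.sum_succ, add_comm]
    rw [h.x_succ, hA]
    exact inv_smul_add_mem_of_convex hQ (h.u_succ_mem k) (x_mem h hL hQ k)
      (h.step_nonneg hL _) (h.sum_nonneg hL k) (hA ▸ h.sum_pos hL k.succ_pos)

theorem potential_succ_le (h : IsFastGradientRun Q L ψ α A x y u) (hL : 0 < L) {k : ℕ}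
    (hψ : IsInexactModel Q f (ψ k) (δ₁ k) (δ₂ k) L (y (k + 1))) (hz : z ∈ Q) :
    fastGradientPotential f z A x u (k + 1) ≤ fastGradientPotential f z A x u k +
      (A k * δ₁ k (x k) (y (k + 1)) + α (k + 1) * δ₁ k z (y (k + 1)) + A (k + 1) * δ₂ k) := by
  have hA : A (k + 1) = α (k + 1) + A k := by rw [h.sum_succ, add_comm]
  have hApos : 0 < α (k + 1) + A k := hA ▸ h.sum_pos hL k.succ_pos
  have three_point := sq_norm_sub_three_point_of_isMinOn
    (hψ.convexOn.smul (h.step_nonneg hL (k + 1))) (h.isMinOn_u_succ k) (h.u_succ_mem k) hz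
  have model_bound := hψ.add_mul_map_inv_smul_add_le (h.x_mem hL hψ.convexOn.1 k)
    (h.u_succ_mem k) hz (h.step_nonneg hL (k + 1)) (h.sum_nonneg hL k) hApos
    (hA ▸ h.x_succ k)
  have quadratic_error : (α (k + 1) + A k) * (L / 2 * ‖x (k + 1) - y (k + 1)‖ ^ 2) =
      1 / 2 * ‖u (k + 1) - u k‖ ^ 2 := by
    rw [h.x_succ, h.y_succ, hA]
    exact add_mul_sq_norm_inv_smul_add_sub hApos.ne' (hA ▸ h.sum_eq_mul_sq (k + 1)) _ _ _
  simp only [smul_eq_mul] at three_point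
  simp only [fastGradientPotential, hA]
  linarith

theorem sum_mul_sub_le (h : IsFastGradientRun Q L ψ α A x y u) (hL : 0 < L)
    (hψ : ∀ k, IsInexactModel Q f (ψ k) (δ₁ k) (δ₂ k) L (y (k + 1))) (hz : z ∈ Q) (N : ℕ) :
    A N * (f (x N) - f z) ≤ 1 / 2 * ‖z - x 0‖ ^ 2 +
      ∑ k ∈ range N, A k * δ₁ k (x k) (y (k + 1)) +
      ∑ k ∈ range N, α (k + 1) * δ₁ k z (y (k + 1)) + ∑ k ∈ range N, A (k + 1) * δ₂ k := by
  have telescope := sum_range_sub (fastGradientPotential f z A x u) N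
  have increments := sum_le_sum fun k (_ : k ∈ range N) ↦
    sub_le_iff_le_add'.2 (h.potential_succ_le hL (hψ k) hz)
  have initial : fastGradientPotential f z A x u 0 = 1 / 2 * ‖z - x 0‖ ^ 2 := by
    simp [fastGradientPotential, h.sum_zero, h.u_zero]
  have final : A N * (f (x N) - f z) ≤ fastGradientPotential f z A x u N :=
    le_add_of_nonneg_right (by positivity)
  rw [sum_add_distrib, sum_add_distrib] at increments
  linarith

end IsFastGradientRun

theorem fast_gradient_method_stochastic_model_deterministic_bound_general {f : E → ℝ} {L : ℝ}
    (hL : 0 < L) {N : ℕ} (hN : 0 < N) {x y u : ℕ → E} {α A : ℕ → ℝ} {ψ : ℕ → E → ℝ}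
    (hrun : IsFastGradientRun Q L ψ α A x y u) {δ₁ : ℕ → E → E → ℝ} {δ₂ : ℕ → ℝ}
    (hψ : ∀ k, IsInexactModel Q f (ψ k) (δ₁ k) (δ₂ k) L (y (k + 1))) {z : E} (hz : z ∈ Q) {R : ℝ}
    (hR : 1 / 2 * ‖z - x 0‖ ^ 2 ≤ R ^ 2) :
    f (x N) - f z ≤ 4 * L * R ^ 2 / N ^ 2 +
      (1 / A N) * ∑ k ∈ range N, A k * δ₁ k (x k) (y (k + 1)) +
      (1 / A N) * ∑ k ∈ range N, α (k + 1) * δ₁ k z (y (k + 1)) +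
      (1 / A N) * ∑ k ∈ range N, A (k + 1) * δ₂ k := by
  have hA : 0 < A N := hrun.sum_pos hL hN
  have rate : R ^ 2 / A N ≤ 4 * L * R ^ 2 / N ^ 2 := by
    rw [div_le_div_iff₀ hA (by positivity)]
    calc R ^ 2 * (N : ℝ) ^ 2 ≤ R ^ 2 * (4 * L * A N) := by
          gcongr
          exact hrun.natCast_sq_le_four_mul_sum hL N
      _ = 4 * L * R ^ 2 * A N := by ring
  have bound := hrun.sum_mul_sub_le hL hψ hz N
  rw [← le_div_iff₀' hA, add_div, add_div, add_div] at bound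
  have initial : 1 / 2 * ‖z - x 0‖ ^ 2 / A N ≤ R ^ 2 / A N := by gcongr
  simp only [one_div_mul_eq_div]
  linarith

end FastGradient

/-- **Fast gradient method with a `(δ₁, δ₂, L, ‖·‖₂)`-model (deterministic bound).**
`ψ k` is the model `ψ_k(·, y_{k+1})`, a `(δ₁^k, δ₂^k, L, ‖·‖₂)`-model of `f` at `y_{k+1}`,
where `δ₁^k : Q × Q → ℝ` and `δ₂^k ∈ ℝ`. -/
theorem fast_gradient_method_stochastic_model_deterministic_bound
    {n : ℕ} (Q : Set (EuclideanSpace ℝ (Fin n)))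
    (hQne : Q.Nonempty) (hQclosed : IsClosed Q) (hQconv : Convex ℝ Q)
    (f : EuclideanSpace ℝ (Fin n) → ℝ) (hfconv : ConvexOn ℝ Q f)
    (L : ℝ) (hL : 0 < L)
    (N : ℕ) (hN : 0 < N)
    (x y u : ℕ → EuclideanSpace ℝ (Fin n))
    (hxQ : ∀ k, x k ∈ Q) (hyQ : ∀ k, y k ∈ Q) (huQ : ∀ k, u k ∈ Q)
    (hinit : y 0 = x 0 ∧ u 0 = x 0)
    (α A : ℕ → ℝ) (hα0 : α 0 = 0) (hA0 : A 0 = 0)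
    -- `α_{k+1}` is the largest root of `A_k + α = L α²`
    (hαroot : ∀ k, A k + α (k + 1) = L * α (k + 1) ^ 2 ∧
      ∀ β : ℝ, A k + β = L * β ^ 2 → β ≤ α (k + 1))
    (hArec : ∀ k, A (k + 1) = A k + α (k + 1))
    (hy : ∀ k, y (k + 1) = (A (k + 1))⁻¹ • (α (k + 1) • u k + A k • x k))
    -- the models: `ψ k = ψ_k(·, y_{k+1})` is a `(δ₁^k, δ₂^k, L, ‖·‖₂)`-model of `f` at `y_{k+1}`
    (ψ : ℕ → EuclideanSpace ℝ (Fin n) → ℝ)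
    (δ1 : ℕ → EuclideanSpace ℝ (Fin n) → EuclideanSpace ℝ (Fin n) → ℝ)
    (δ2 : ℕ → ℝ)
    (hmodel : ∀ k, ConvexOn ℝ Q (ψ k) ∧ ψ k (y (k + 1)) = 0 ∧
      ∀ z ∈ Q, -δ1 k z (y (k + 1)) ≤ f z - (f (y (k + 1)) + ψ k z) ∧
        f z - (f (y (k + 1)) + ψ k z) ≤ L / 2 * ‖z - y (k + 1)‖ ^ 2 + δ2 k)
    -- `u_{k+1} = argmin_{z ∈ Q} [(1/2)‖z − u_k‖₂² + α_{k+1} ψ_k(z, y_{k+1})]`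
    (hmin : ∀ k, ∀ z ∈ Q,
      (1 / 2) * ‖u (k + 1) - u k‖ ^ 2 + α (k + 1) * ψ k (u (k + 1)) ≤
        (1 / 2) * ‖z - u k‖ ^ 2 + α (k + 1) * ψ k z)
    (hx : ∀ k, x (k + 1) = (A (k + 1))⁻¹ • (α (k + 1) • u (k + 1) + A k • x k))
    -- the optimum
    (xstar : EuclideanSpace ℝ (Fin n)) (hxstarQ : xstar ∈ Q)
    (hxstar : ∀ z ∈ Q, f xstar ≤ f z)
    (R : ℝ) (hR : (1 / 2) * ‖xstar - x 0‖ ^ 2 ≤ R ^ 2) :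
    f (x N) - f xstar ≤ 4 * L * R ^ 2 / N ^ 2 +
      (1 / A N) * ∑ k ∈ range N, A k * δ1 k (x k) (y (k + 1)) +
      (1 / A N) * ∑ k ∈ range N, α (k + 1) * δ1 k xstar (y (k + 1)) +
      (1 / A N) * ∑ k ∈ range N, A (k + 1) * δ2 k := by
  have hrun : IsFastGradientRun Q L ψ α A x y u :=
    ⟨⟨hα0, hA0, hαroot, hArec⟩, hxQ 0, hinit.2, hy, fun k ↦ huQ (k + 1), hmin, hx⟩
  exact fast_gradient_method_stochastic_model_deterministic_bound_general hL hN hrun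
    (fun k ↦ ⟨(hmodel k).1, (hmodel k).2.1, fun z hz ↦ ((hmodel k).2.2 z hz).1,
      fun z hz ↦ ((hmodel k).2.2 z hz).2⟩) hxstarQ hR
end

section
/- Inexact model for functions with Hölder continuous gradient. Let Q ⊆ ℝⁿ be a nonempty convex set and f : Q → ℝ a convex differentiable function whose gradient is ν-Hölder continuous for some ν ∈ [0,1): ‖∇f(x) − ∇f(y)‖_* ≤ L_ν ‖x − y‖^ν for all x, y ∈ Q, where L_ν > 0. Then for every δ > 0 and all x, y ∈ Q, 0 ≤ f(x) − f(y) − ⟨∇f(y), x − y⟩ ≤ (L(δ)/2)‖x − y‖² + δ, where L(δ) = L_ν [ (L_ν/(2δ)) · (1−ν)/(1+ν) ]^{(1−ν)/(1+ν)}. In particular, ψ(x,y) = ⟨∇f(y), x − y⟩ with value f(y) is a (δ, L(δ), ‖·‖)-model of f at every y ∈ Q. -/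
open RealInnerProductSpace

/-!
Restricted to the segment from `y` to `x`, the function `f` has derivative at most
`f' y (x - y) + L ‖x - y‖ ^ (1 + ν) t ^ ν` at time `t`, by duality and the Hölder condition.
Integrating, the linearization error is at most `L / (1 + ν) * ‖x - y‖ ^ (1 + ν)`. Trading the
power `1 + ν` for the power `2` at the price of `δ` is, after rescaling, Bernoulli's inequality
with exponent `2 / (1 + ν)`. That the error is nonnegative is the tangent inequality for convex
functions.
-/

/-- The constant `L(δ)` of the inexact model of a function whose gradient is `ν`-Hölder with
constant `L`. Since `0 ^ 0 = 1` for real powers, it equals `L` at `ν = 1`. -/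
noncomputable def holderModelConst (ν L δ : ℝ) : ℝ :=
  L * (L / (2 * δ) * ((1 - ν) / (1 + ν))) ^ ((1 - ν) / (1 + ν))

lemma one_add_mul_le_rpow_self_mul_rpow_add_one {p u : ℝ} (hp : 0 ≤ p) (hu : 0 ≤ u) :
    (1 + p) * u ≤ p ^ p * u ^ (1 + p) + 1 := by
  rcases hp.eq_or_lt with rfl | hp
  · simp
  have bernoulli : 1 + (1 + p) * (p * u - 1) ≤ (p * u) ^ (1 + p) := by
    simpa only [add_sub_cancel] using
      one_add_mul_self_le_rpow_one_add (s := p * u - 1) (by linarith [mul_nonneg hp.le hu])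
        (le_add_of_nonneg_right hp.le)
  refine le_of_mul_le_mul_left ?_ hp
  calc p * ((1 + p) * u) = 1 + (1 + p) * (p * u - 1) + p := by ring
    _ ≤ (p * u) ^ (1 + p) + p := by gcongr
    _ = p * (p ^ p * u ^ (1 + p) + 1) := by
      rw [Real.mul_rpow hp.le hu, Real.rpow_add hp, Real.rpow_one]
      ring

lemma holder_power_le_quadratic {ν L δ r : ℝ} (hν : ν ∈ Set.Ioc (-1 : ℝ) 1) (hL : 0 ≤ L)
    (hδ : 0 < δ) (hr : 0 ≤ r) :
    L / (1 + ν) * r ^ (1 + ν) ≤ holderModelConst ν L δ / 2 * r ^ 2 + δ := by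
  have hν' : 0 < 1 + ν := by linarith [hν.1]
  unfold holderModelConst
  set p := (1 - ν) / (1 + ν) with hp
  set k := L / (2 * δ) with hk
  have hp0 : 0 ≤ p := div_nonneg (by linarith [hν.2]) hν'.le
  have hk0 : 0 ≤ k := by positivity
  have hLk : L = 2 * δ * k := by rw [hk]; field_simp
  have one_add_p : 1 + p = 2 / (1 + ν) := by rw [hp]; field_simp; ring
  have rpow_r : (r ^ (1 + ν)) ^ (1 + p) = r ^ 2 := by
    rw [← Real.rpow_mul hr, one_add_p, mul_div_cancel₀ _ hν'.ne', Real.rpow_two]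
  calc L / (1 + ν) * r ^ (1 + ν) = δ * ((1 + p) * (k * r ^ (1 + ν))) := by
        rw [one_add_p, hLk]; ring
    _ ≤ δ * (p ^ p * (k * r ^ (1 + ν)) ^ (1 + p) + 1) := by
        gcongr
        exact one_add_mul_le_rpow_self_mul_rpow_add_one hp0 (by positivity)
    _ = L * (k * p) ^ p / 2 * r ^ 2 + δ := by
        rw [Real.mul_rpow hk0 (by positivity), rpow_r, Real.mul_rpow hk0 hp0,
          Real.rpow_add_of_nonneg hk0 zero_le_one hp0, Real.rpow_one, hLk]
        ring

lemma image_le_of_deriv_le_add_mul_rpow {g g' : ℝ → ℝ} {a b m C ν : ℝ} (hab : a ≤ b)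
    (hν : 0 ≤ ν) (hg : ∀ t ∈ Set.Icc a b, HasDerivWithinAt g (g' t) (Set.Icc a b) t)
    (hg' : ∀ t ∈ Set.Ico a b, g' t ≤ m + C * (t - a) ^ ν) :
    g b ≤ g a + m * (b - a) + C / (1 + ν) * (b - a) ^ (1 + ν) := by
  have hν' : 1 + ν ≠ 0 := by positivity
  let G : ℝ → ℝ := fun t ↦ g a + m * (t - a) + C / (1 + ν) * (t - a) ^ (1 + ν)
  have hG (t : ℝ) : HasDerivAt G (m + C * (t - a) ^ ν) t := by
    have hsub : HasDerivAt (fun s ↦ s - a) 1 t := (hasDerivAt_id t).sub_const a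
    have hpow := (hsub.rpow_const (p := 1 + ν) (.inr (by linarith))).const_mul (C / (1 + ν))
    refine (((hsub.const_mul m).const_add (g a)).add hpow).congr_deriv ?_
    rw [add_sub_cancel_left]
    field_simp
  exact image_le_of_deriv_right_le_deriv_boundary (B := G)
    (fun t ht ↦ (hg t ht).continuousWithinAt)
    (fun t ht ↦ (hg t (Set.Ico_subset_Icc_self ht)).mono_of_mem_nhdsWithin
      (Icc_mem_nhdsGE_of_mem ht))
    (by simp [G, Real.zero_rpow hν'])
    (fun t _ ↦ (hG t).continuousAt.continuousWithinAt)
    (fun t _ ↦ (hG t).hasDerivWithinAt) hg' (Set.right_mem_Icc.2 hab)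

lemma map_le_mul_seminorm_of_le_on_unitBall {E F : Type*} [AddCommGroup E] [Module ℝ E]
    [FunLike F E ℝ] [LinearMapClass F ℝ E ℝ] {p : Seminorm ℝ E} {φ : F} {C : ℝ}
    (h : ∀ v, p v ≤ 1 → φ v ≤ C) (v : E) : φ v ≤ C * p v := by
  rcases (apply_nonneg p v).eq_or_lt with hv | hv
  · -- The whole line through `v` lies in the unit ball, so `φ` is bounded above on it.
    by_contra! hlt
    rw [← hv, mul_zero] at hlt
    have := h (((C + 1) / φ v) • v) (by simp [map_smul_eq_mul, ← hv])
    rw [map_smul, smul_eq_mul, div_mul_cancel₀ _ hlt.ne'] at this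
    linarith
  · have := h ((p v)⁻¹ • v) (by
      rw [map_smul_eq_mul, Real.norm_of_nonneg (inv_nonneg.2 hv.le), inv_mul_cancel₀ hv.ne'])
    rwa [map_smul, smul_eq_mul, inv_mul_le_iff₀' hv] at this

section Linearization

variable {E : Type*} [NormedAddCommGroup E] [NormedSpace ℝ E] {Q : Set E} {f : E → ℝ} {x y : E}

lemma hasDerivWithinAt_comp_lineMap {φ : StrongDual ℝ E} {t : ℝ} (hQ : Convex ℝ Q)
    (hy : y ∈ Q) (hx : x ∈ Q) (hf : HasFDerivWithinAt f φ Q (AffineMap.lineMap y x t)) :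
    HasDerivWithinAt (f ∘ AffineMap.lineMap y x) (φ (x - y)) (Set.Icc (0 : ℝ) 1) t :=
  hf.comp_hasDerivWithinAt t AffineMap.hasDerivWithinAt_lineMap (hQ.mapsTo_lineMap hy hx)

lemma le_sub_of_convexOn_of_hasFDerivWithinAt {φ : StrongDual ℝ E} (hf : ConvexOn ℝ Q f)
    (hy : y ∈ Q) (hx : x ∈ Q) (hφ : HasFDerivWithinAt f φ Q y) : φ (x - y) ≤ f x - f y := by
  have hconv : ConvexOn ℝ (Set.Icc (0 : ℝ) 1) (f ∘ AffineMap.lineMap y x) :=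
    (hf.comp_affineMap _).subset (hf.1.mapsTo_lineMap hy hx) (convex_Icc 0 1)
  have hderiv := hasDerivWithinAt_comp_lineMap (t := 0) hf.1 hy hx (by simpa using hφ)
  simpa [slope_def_field] using hconv.le_slope_of_hasDerivWithinAt
    (Set.left_mem_Icc.2 zero_le_one) (Set.right_mem_Icc.2 zero_le_one) zero_lt_one hderiv

lemma sub_sub_le_of_holder_fderiv {f' : E → StrongDual ℝ E} {p : Seminorm ℝ E} {ν L : ℝ}
    (hQ : Convex ℝ Q) (hf : ∀ z ∈ Q, HasFDerivWithinAt f (f' z) Q z) (hν : 0 ≤ ν)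
    (hy : y ∈ Q) (hHolder : ∀ z ∈ Q, ∀ v, (f' z - f' y) v ≤ L * p (z - y) ^ ν * p v)
    (hx : x ∈ Q) : f x - f y - f' y (x - y) ≤ L / (1 + ν) * p (x - y) ^ (1 + ν) := by
  let γ : ℝ →ᵃ[ℝ] E := AffineMap.lineMap y x
  have hγ : Set.MapsTo γ (Set.Icc 0 1) Q := hQ.mapsTo_lineMap hy hx
  have deriv_le (t : ℝ) (ht : t ∈ Set.Ico (0 : ℝ) 1) :
      f' (γ t) (x - y) ≤ f' y (x - y) + L * p (x - y) ^ (1 + ν) * (t - 0) ^ ν := by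
    have hpγ : p (γ t - y) = t * p (x - y) := by
      rw [show γ t - y = t • (x - y) by simp [γ, AffineMap.lineMap_apply], map_smul_eq_mul,
        Real.norm_of_nonneg ht.1]
    rw [← sub_le_iff_le_add', ← sub_apply]
    calc (f' (γ t) - f' y) (x - y) ≤ L * p (γ t - y) ^ ν * p (x - y) :=
          hHolder _ (hγ (Set.Ico_subset_Icc_self ht)) _
      _ = L * p (x - y) ^ (1 + ν) * (t - 0) ^ ν := by
          rw [hpγ, Real.mul_rpow ht.1 (apply_nonneg p _),
            Real.rpow_add_of_nonneg (apply_nonneg p _) zero_le_one hν, Real.rpow_one, sub_zero]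
          ring
  have := image_le_of_deriv_le_add_mul_rpow zero_le_one hν
    (fun t ht ↦ hasDerivWithinAt_comp_lineMap hQ hy hx (hf _ (hγ ht))) deriv_le
  simp only [Function.comp_apply, AffineMap.lineMap_apply_one, AffineMap.lineMap_apply_zero,
    sub_zero, mul_one, Real.one_rpow] at this
  linarith [mul_div_right_comm L (p (x - y) ^ (1 + ν)) (1 + ν)]

theorem holder_gradient_inexact_model_general {f' : E → StrongDual ℝ E} {p : Seminorm ℝ E}
    {ν L δ : ℝ} (hfconv : ConvexOn ℝ Q f) (hf : ∀ z ∈ Q, HasFDerivWithinAt f (f' z) Q z)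
    (hν : ν ∈ Set.Icc (0 : ℝ) 1) (hL : 0 ≤ L)
    (hHolder : ∀ x ∈ Q, ∀ y ∈ Q, ∀ v, p v ≤ 1 → (f' x - f' y) v ≤ L * p (x - y) ^ ν)
    (hδ : 0 < δ) (hx : x ∈ Q) (hy : y ∈ Q) :
    0 ≤ f x - f y - f' y (x - y) ∧
      f x - f y - f' y (x - y) ≤ holderModelConst ν L δ / 2 * p (x - y) ^ 2 + δ := by
  refine ⟨sub_nonneg.2 (le_sub_of_convexOn_of_hasFDerivWithinAt hfconv hy hx (hf y hy)), ?_⟩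
  calc f x - f y - f' y (x - y) ≤ L / (1 + ν) * p (x - y) ^ (1 + ν) :=
        sub_sub_le_of_holder_fderiv hfconv.1 hf hν.1 hy
          (fun z hz ↦ map_le_mul_seminorm_of_le_on_unitBall (hHolder z hz y hy)) hx
    _ ≤ holderModelConst ν L δ / 2 * p (x - y) ^ 2 + δ :=
        holder_power_le_quadratic ⟨by linarith [hν.1], hν.2⟩ hL hδ (apply_nonneg p _)

end Linearization

/-- **Inexact model for functions with Hölder continuous gradient.**
If `f` is convex and differentiable on `Q` with `ν`-Hölder continuous gradient
(w.r.t. a general norm `nrm` with dual norm `dnrm`), then for every `δ > 0` the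
linearization `⟨∇f(y), x − y⟩` is a `(δ, L(δ), nrm)`-model of `f` at every `y ∈ Q`,
with `L(δ) = L_ν [ (L_ν/(2δ)) (1−ν)/(1+ν) ]^{(1−ν)/(1+ν)}`. -/
theorem holder_gradient_inexact_model
    {n : ℕ} (Q : Set (EuclideanSpace ℝ (Fin n)))
    (hQne : Q.Nonempty) (hQconv : Convex ℝ Q)
    (f : EuclideanSpace ℝ (Fin n) → ℝ) (hfconv : ConvexOn ℝ Q f)
    -- a general norm `nrm` on `ℝⁿ` and its dual norm `dnrm`
    (nrm dnrm : EuclideanSpace ℝ (Fin n) → ℝ)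
    (hnrm_zero : ∀ z, nrm z = 0 ↔ z = 0)
    (hnrm_smul : ∀ (c : ℝ) z, nrm (c • z) = |c| * nrm z)
    (hnrm_add : ∀ z w, nrm (z + w) ≤ nrm z + nrm w)
    (hdnrm : ∀ l, IsGreatest ((fun v => ⟪l, v⟫) '' {v | nrm v ≤ 1}) (dnrm l))
    -- gradient of `f` on `Q`
    (Df : EuclideanSpace ℝ (Fin n) → EuclideanSpace ℝ (Fin n))
    (hDf : ∀ z ∈ Q, HasGradientWithinAt f (Df z) Q z)
    -- `ν`-Hölder continuity of the gradient
    (ν : ℝ) (hν : ν ∈ Set.Ico (0 : ℝ) 1)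
    (Lν : ℝ) (hLν : 0 < Lν)
    (hHolder : ∀ x ∈ Q, ∀ y ∈ Q, dnrm (Df x - Df y) ≤ Lν * nrm (x - y) ^ ν) :
    ∀ δ : ℝ, 0 < δ → ∀ x ∈ Q, ∀ y ∈ Q,
      0 ≤ f x - f y - ⟪Df y, x - y⟫ ∧
      f x - f y - ⟪Df y, x - y⟫ ≤
        (Lν * (Lν / (2 * δ) * ((1 - ν) / (1 + ν))) ^ ((1 - ν) / (1 + ν))) / 2 *
          nrm (x - y) ^ 2 + δ := by
  intro δ hδ x hx y hy
  let f' := fun z ↦ InnerProductSpace.toDual ℝ _ (Df z)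
  have holder_on_unitBall : ∀ x ∈ Q, ∀ y ∈ Q, ∀ v, nrm v ≤ 1 →
      (f' x - f' y) v ≤ Lν * nrm (x - y) ^ ν := fun x hx y hy v hv ↦
    calc (f' x - f' y) v = ⟪Df x - Df y, v⟫ := by simp [f', inner_sub_left]
      _ ≤ dnrm (Df x - Df y) := (hdnrm _).2 ⟨v, hv, rfl⟩
      _ ≤ Lν * nrm (x - y) ^ ν := hHolder x hx y hy
  exact holder_gradient_inexact_model_general (p := .of nrm hnrm_add hnrm_smul) hfconv
    (fun z hz ↦ (hDf z hz).hasFDerivWithinAt) (Set.Ico_subset_Icc_self hν) hLν.le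
    holder_on_unitBall hδ hx hy
end

section
/- Stochastic gradients yield a (δ₁, δ₂, 2L, ‖·‖₂)-model. Let Q ⊆ ℝⁿ be a nonempty convex set and f : Q → ℝ a convex differentiable function with L-Lipschitz gradient with respect to the Euclidean norm (L > 0). Fix y ∈ Q and an arbitrary vector g ∈ ℝⁿ (e.g., a stochastic gradient estimate at y), and set ψ(x, y) = ⟨g, x − y⟩. Then for all x ∈ Q, −δ₁(x,y) ≤ f(x) − (f(y) + ψ(x,y)) ≤ (2L/2)‖x − y‖₂² + δ₂, where δ₁(x,y) = ⟨g − ∇f(y), x − y⟩ and δ₂ = ‖g − ∇f(y)‖₂²/(2L); that is, ψ is a (δ₁, δ₂, 2L, ‖·‖₂)-model of f at y. -/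
open RealInnerProductSpace

/-!
On the segment from `y` to `x` the derivative of the remainder `f x - f y - f' y (x - y)` grows at
most linearly, so the remainder is at most `L / 2 * ‖x - y‖ ^ 2`; convexity makes it nonnegative.
Replacing `f' y` by `g` adds the error `(f' y - g) (x - y)`. The lower bound keeps this term as
`-δ₁`, while Young's inequality bounds it by another `L / 2 * ‖x - y‖ ^ 2` plus `δ₂`, which is why
the smoothness constant doubles.
-/

section

variable {E F : Type*} [NormedAddCommGroup E] [NormedSpace ℝ E]
  [NormedAddCommGroup F] [NormedSpace ℝ F] {Q : Set E} {x y : E} {L : ℝ}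

lemma add_apply_sub_le_of_convexOn {f : E → ℝ} {f' : E →L[ℝ] ℝ} (hf : ConvexOn ℝ Q f)
    (hf' : HasFDerivWithinAt f f' Q y) (hx : x ∈ Q) (hy : y ∈ Q) :
    f y + f' (x - y) ≤ f x := by
  let γ : ℝ →ᵃ[ℝ] E := AffineMap.lineMap y x
  have hderiv : HasDerivWithinAt (f ∘ γ) (f' (x - y)) (γ ⁻¹' Q) 0 :=
    hf'.comp_hasDerivWithinAt_of_eq 0 AffineMap.hasDerivWithinAt_lineMap
      (Set.mapsTo_preimage γ Q) (AffineMap.lineMap_apply_zero y x).symm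
  have hslope : f' (x - y) ≤ slope (f ∘ γ) 0 1 :=
    (hf.comp_affineMap γ).le_slope_of_hasDerivWithinAt
      (by simpa [γ] using hy) (by simpa [γ] using hx) one_pos hderiv
  have hslope_eq : slope (f ∘ γ) 0 1 = f x - f y := by simp [slope_def_field, γ]
  linarith

lemma norm_image_sub_le_of_norm_deriv_le_mul_sub {r r' : ℝ → F} {a b C : ℝ} (hab : a ≤ b)
    (hr : ∀ t ∈ Set.Icc a b, HasDerivWithinAt r (r' t) (Set.Icc a b) t)
    (bound : ∀ t ∈ Set.Ico a b, ‖r' t‖ ≤ C * (t - a)) :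
    ‖r b - r a‖ ≤ C / 2 * (b - a) ^ 2 := by
  have hB : ∀ t, HasDerivAt (fun t ↦ C / 2 * (t - a) ^ 2) (C * (t - a)) t := fun t ↦
    ((((hasDerivAt_id' t).sub_const a).fun_pow 2).const_mul (C / 2)).congr_deriv (by ring)
  exact image_norm_le_of_norm_deriv_right_le_deriv_boundary (f := fun t ↦ r t - r a)
    (fun t ht ↦ ((hr t ht).sub_const (r a)).continuousWithinAt)
    (fun t ht ↦ ((hr t ⟨ht.1, ht.2.le⟩).sub_const (r a)).mono_of_mem_nhdsWithin
      (Icc_mem_nhdsGE_of_mem ht))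
    (by simp) hB bound (Set.right_mem_Icc.2 hab)

lemma norm_sub_sub_apply_le_of_norm_fderiv_sub_le {f : E → F} {f' : E → E →L[ℝ] F}
    (hQ : StarConvex ℝ y Q) (hf' : ∀ z ∈ Q, HasFDerivWithinAt f (f' z) Q z)
    (hLip : ∀ z ∈ Q, ‖f' z - f' y‖ ≤ L * ‖z - y‖) (hx : x ∈ Q) :
    ‖f x - f y - f' y (x - y)‖ ≤ L / 2 * ‖x - y‖ ^ 2 := by
  let γ : ℝ → E := AffineMap.lineMap y x
  have hγ : Set.MapsTo γ (Set.Icc 0 1) Q := fun t ht ↦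
    hQ.segment_subset hx (lineMap_mem_segment ℝ y x ht)
  let r : E → F := fun z ↦ f z - f' y z
  have hr : ∀ t ∈ Set.Icc (0 : ℝ) 1,
      HasDerivWithinAt (r ∘ γ) ((f' (γ t) - f' y) (x - y)) (Set.Icc 0 1) t := fun t ht ↦
    ((hf' _ (hγ ht)).fun_sub (f' y).hasFDerivWithinAt).comp_hasDerivWithinAt t
      AffineMap.hasDerivWithinAt_lineMap hγ
  have hbound : ∀ t ∈ Set.Ico (0 : ℝ) 1,
      ‖(f' (γ t) - f' y) (x - y)‖ ≤ L * ‖x - y‖ ^ 2 * (t - 0) := fun t ht ↦ by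
    have hdist : ‖γ t - y‖ = t * ‖x - y‖ := by
      simp [γ, AffineMap.lineMap_apply, norm_smul, abs_of_nonneg ht.1]
    calc ‖(f' (γ t) - f' y) (x - y)‖ ≤ L * ‖γ t - y‖ * ‖x - y‖ :=
          (f' (γ t) - f' y).le_of_opNorm_le (hLip _ (hγ ⟨ht.1, ht.2.le⟩)) (x - y)
      _ = L * ‖x - y‖ ^ 2 * (t - 0) := by rw [hdist]; ring
  calc ‖f x - f y - f' y (x - y)‖ = ‖(r ∘ γ) 1 - (r ∘ γ) 0‖ := by
        simp [r, γ, sub_sub_sub_comm]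
    _ ≤ L * ‖x - y‖ ^ 2 / 2 * (1 - 0) ^ 2 :=
        norm_image_sub_le_of_norm_deriv_le_mul_sub zero_le_one hr hbound
    _ = L / 2 * ‖x - y‖ ^ 2 := by ring

lemma norm_apply_le_half_mul_sq_add_sq_div (hL : 0 < L) (A : E →L[ℝ] F) (v : E) :
    ‖A v‖ ≤ L / 2 * ‖v‖ ^ 2 + ‖A‖ ^ 2 / (2 * L) := by
  have hyoung : 2 * ‖v‖ * ‖A‖ ≤ L * ‖v‖ ^ 2 + L⁻¹ * ‖A‖ ^ 2 := two_mul_le_add_mul_sq hL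
  calc ‖A v‖ ≤ ‖A‖ * ‖v‖ := A.le_opNorm v
    _ ≤ (L * ‖v‖ ^ 2 + L⁻¹ * ‖A‖ ^ 2) / 2 := by linarith
    _ = L / 2 * ‖v‖ ^ 2 + ‖A‖ ^ 2 / (2 * L) := by field_simp

theorem stochastic_gradient_inexact_model_general {f : E → ℝ} {f' : E → E →L[ℝ] ℝ}
    (hf : ConvexOn ℝ Q f) (hf' : ∀ z ∈ Q, HasFDerivWithinAt f (f' z) Q z) (hL : 0 < L)
    (hy : y ∈ Q) (hLip : ∀ z ∈ Q, ‖f' z - f' y‖ ≤ L * ‖z - y‖) (g : E →L[ℝ] ℝ) (hx : x ∈ Q) :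
    -(g - f' y) (x - y) ≤ f x - (f y + g (x - y)) ∧
      f x - (f y + g (x - y)) ≤ 2 * L / 2 * ‖x - y‖ ^ 2 + ‖g - f' y‖ ^ 2 / (2 * L) := by
  have hconv : f y + f' y (x - y) ≤ f x := add_apply_sub_le_of_convexOn hf (hf' y hy) hx hy
  have hdescent : f x - f y - f' y (x - y) ≤ L / 2 * ‖x - y‖ ^ 2 :=
    (Real.le_norm_self _).trans
      (norm_sub_sub_apply_le_of_norm_fderiv_sub_le (hf.1.starConvex hy) hf' hLip hx)
  have hyoung : -(g - f' y) (x - y) ≤ L / 2 * ‖x - y‖ ^ 2 + ‖g - f' y‖ ^ 2 / (2 * L) :=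
    (neg_le_abs _).trans (norm_apply_le_half_mul_sq_add_sq_div hL (g - f' y) (x - y))
  rw [sub_apply] at hyoung ⊢
  constructor <;> linarith

end

/-- **Stochastic gradients yield a `(δ₁, δ₂, 2L, ‖·‖₂)`-model.**
If `f` is convex with `L`-Lipschitz gradient (Euclidean norm) and `g` is any vector
(e.g. a stochastic gradient estimate at `y`), then `ψ(x,y) = ⟨g, x − y⟩` is a
`(δ₁, δ₂, 2L, ‖·‖₂)`-model of `f` at `y` with `δ₁(x,y) = ⟨g − ∇f(y), x − y⟩` and
`δ₂ = ‖g − ∇f(y)‖₂²/(2L)`. -/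
theorem stochastic_gradient_inexact_model
    {n : ℕ} (Q : Set (EuclideanSpace ℝ (Fin n)))
    (hQne : Q.Nonempty) (hQconv : Convex ℝ Q)
    (f : EuclideanSpace ℝ (Fin n) → ℝ) (hfconv : ConvexOn ℝ Q f)
    (Df : EuclideanSpace ℝ (Fin n) → EuclideanSpace ℝ (Fin n))
    (hDf : ∀ z ∈ Q, HasGradientWithinAt f (Df z) Q z)
    (L : ℝ) (hL : 0 < L)
    (hLip : ∀ x ∈ Q, ∀ y ∈ Q, ‖Df x - Df y‖ ≤ L * ‖x - y‖)
    (y : EuclideanSpace ℝ (Fin n)) (hy : y ∈ Q)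
    (g : EuclideanSpace ℝ (Fin n)) :
    ∀ x ∈ Q,
      -⟪g - Df y, x - y⟫ ≤ f x - (f y + ⟪g, x - y⟫) ∧
      f x - (f y + ⟪g, x - y⟫) ≤ 2 * L / 2 * ‖x - y‖ ^ 2 + ‖g - Df y‖ ^ 2 / (2 * L) := by
  let D := InnerProductSpace.toDual ℝ (EuclideanSpace ℝ (Fin n))
  intro x hx
  simpa [D, ← map_sub] using stochastic_gradient_inexact_model_general (f' := fun z ↦ D (Df z))
    hfconv hDf hL hy (fun z hz ↦ by simpa [← map_sub] using hLip z hz y hy) (D g) hx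
end
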